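/- arXiv:1010.3571 — 11 statements merged into one kernel-verified Lean document; each statement's English description precedes it below -/
import Mathlib

section
/- Let d = 2. Let M = {M_k} be any POVM on ℂ², and let X₁, X₂ be Hermitian 2×2 matrices with X₁X₂ ≠ X₂X₁, with coordinate vectors x₁, x₂ ∈ ℝ³. Suppose u₁, u₂ ∈ ℝ³ satisfy J(M)u₁ = x₁ and J(M)u₂ = x₂. Then (x₁·u₁ − Var_ρ(X₁)) · (x₂·u₂ − Var_ρ(X₂)) ≥ Var_ρ(X₁)Var_ρ(X₂) − C_s(X₁,X₂)². -/
open Matrix BigOperators ComplexOrder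

/-!
In the coordinates `A ↦ (tr A, (tr (Λ i * A))ᵢ)` on Hermitian `2 × 2` matrices, write `r` for the
coordinate vector of `ρ` and put `S = I/2 - r rᵀ`. Since traceless qubit observables anticommute up
to a scalar, the symmetrized covariance of `X` and `Y` is `x · S y` (`covariance_eq`), and
`S` is the inverse of the quantum Fisher information. The Gill–Massar inequality `tr (S J) ≤ 1` for
the Fisher information `J` of any POVM follows by summing a bound on each effect
(`gillMassar_term`).

With `J uᵢ = xᵢ` and `c = u₁ × u₂`, the measurement errors are the diagonal values of the form
`G = J - J S J` at `u₁, u₂`. Dropping the square of the off-diagonal value bounds their product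
below by the Gram determinant of `G`, and the adjugate identity
`adj (1 - N) - adj N = (1 - tr N) • 1 + N` for `N = S J` turns the difference between this Gram
determinant and `Var X₁ Var X₂ - C_s²` into `(1 - tr (S J)) c · adj(J) c + det J (c · S c)`
(`adjugate_identity`), in which every factor is nonnegative. This never inverts `J`, so singular `J`
needs no separate treatment.
-/

/-- Polarized Cayley–Hamilton for `2 × 2` matrices. -/
lemma anticomm_fin_two (X Y : Matrix (Fin 2) (Fin 2) ℂ) :
    X * Y + Y * X = X.trace • Y + Y.trace • X +
      ((X * Y).trace - X.trace * Y.trace) • (1 : Matrix (Fin 2) (Fin 2) ℂ) := by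
  ext i j
  fin_cases i <;> fin_cases j <;>
    simp [Matrix.mul_apply, Matrix.trace, Fin.sum_univ_two] <;> ring

lemma trace_im_eq_zero {A : Matrix (Fin 2) (Fin 2) ℂ} (hA : A.IsHermitian) : A.trace.im = 0 := by
  have h : star A.trace = A.trace := by rw [← Matrix.trace_conjTranspose, hA.eq]
  exact Complex.conj_eq_iff_im.mp h

/-- Parseval for the orthonormal family `Λ` completed by the identity. -/
lemma trace_mul_re_eq
    (Λ : Fin 3 → Matrix (Fin 2) (Fin 2) ℂ)
    (hΛtrace : ∀ i, (Λ i).trace = 0)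
    (hΛortho : ∀ i j, (Λ i * Λ j).trace = if i = j then 1 else 0)
    (hΛspan : ∀ X : Matrix (Fin 2) (Fin 2) ℂ, X.IsHermitian → X.trace = 0 →
      ∃ c : Fin 3 → ℝ, X = ∑ i, (c i : ℂ) • Λ i)
    {A B : Matrix (Fin 2) (Fin 2) ℂ} (hA : A.IsHermitian) (hB : B.IsHermitian) :
    (A * B).trace.re = A.trace.re * B.trace.re / 2 +
      ∑ i, (Λ i * A).trace.re * (Λ i * B).trace.re := by
  have hAim := trace_im_eq_zero hA
  have hBim := trace_im_eq_zero hB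
  have hAt : A.trace = (A.trace.re : ℂ) := by apply Complex.ext <;> simp [hAim]
  obtain ⟨c, hc⟩ := hΛspan (A - ((A.trace.re / 2 : ℝ) : ℂ) • 1)
    (by
      refine hA.sub ?_
      rw [Matrix.IsHermitian, Matrix.conjTranspose_smul, Matrix.conjTranspose_one,
        Complex.star_def, Complex.conj_ofReal])
    (by
      rw [Matrix.trace_sub, Matrix.trace_smul, Matrix.trace_one]
      conv_lhs => rw [hAt]
      simp)
  have hA' : A = ((A.trace.re / 2 : ℝ) : ℂ) • 1 + ∑ i, (c i : ℂ) • Λ i := by rw [← hc]; abel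
  have hcoord : ∀ i, (Λ i * A).trace.re = c i := by
    intro i
    rw [hA']
    simp [Matrix.mul_add, Matrix.mul_sum, Matrix.trace_sum, hΛtrace, hΛortho]
  simp_rw [hcoord]
  conv_lhs => rw [hA']
  simp only [Matrix.add_mul, Matrix.sum_mul, Matrix.smul_mul, Matrix.one_mul, Matrix.trace_add,
    Matrix.trace_sum, Matrix.trace_smul, smul_eq_mul, Complex.add_re, Complex.re_sum,
    Complex.re_ofReal_mul]
  ring

/-- For positive semidefinite `A` one has `tr (A²) ≤ (tr A)²`, i.e. `det A ≥ 0`. -/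
lemma trace_sq_re_le {A : Matrix (Fin 2) (Fin 2) ℂ} (hA : A.PosSemidef) :
    (A * A).trace.re ≤ A.trace.re ^ 2 := by
  have hd : 0 ≤ A.det.re := (Complex.le_def.mp hA.det_nonneg).1
  have him := trace_im_eq_zero hA.isHermitian
  have key : (A * A).trace = A.trace * A.trace - 2 * A.det := by
    simp [Matrix.trace, Matrix.mul_apply, Fin.sum_univ_two, Matrix.det_fin_two]
    ring
  rw [key]
  simp [Complex.sub_re, Complex.mul_re, him]
  nlinarith

/-- The symmetrized covariance of `X` and `Y` is `x · S y` with `S = I/2 - r rᵀ`, where `x, y, r`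
are the coordinate vectors of `X, Y, ρ`. -/
lemma covariance_eq
    (Λ : Fin 3 → Matrix (Fin 2) (Fin 2) ℂ)
    (hΛtrace : ∀ i, (Λ i).trace = 0)
    (hΛortho : ∀ i j, (Λ i * Λ j).trace = if i = j then 1 else 0)
    (hΛspan : ∀ X : Matrix (Fin 2) (Fin 2) ℂ, X.IsHermitian → X.trace = 0 →
      ∃ c : Fin 3 → ℝ, X = ∑ i, (c i : ℂ) • Λ i)
    {ρ X Y : Matrix (Fin 2) (Fin 2) ℂ} (hρ : ρ.IsHermitian) (hρtr : ρ.trace = 1)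
    (hX : X.IsHermitian) (hY : Y.IsHermitian) :
    (1 / 2) * (ρ * (X * Y + Y * X)).trace.re - (ρ * X).trace.re * (ρ * Y).trace.re =
      (∑ i, (Λ i * X).trace.re * (Λ i * Y).trace.re) / 2 -
        (∑ i, (Λ i * ρ).trace.re * (Λ i * X).trace.re) *
          (∑ i, (Λ i * ρ).trace.re * (Λ i * Y).trace.re) := by
  have hXim := trace_im_eq_zero hX
  have hYim := trace_im_eq_zero hY
  have h1 := trace_mul_re_eq Λ hΛtrace hΛortho hΛspan hρ hX
  have h2 := trace_mul_re_eq Λ hΛtrace hΛortho hΛspan hρ hY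
  have h3 := trace_mul_re_eq Λ hΛtrace hΛortho hΛspan hX hY
  have h4 : (ρ * (X * Y + Y * X)).trace.re =
      X.trace.re * (ρ * Y).trace.re + Y.trace.re * (ρ * X).trace.re +
        ((X * Y).trace.re - X.trace.re * Y.trace.re) := by
    rw [anticomm_fin_two]
    simp [Matrix.mul_add, hρtr, hXim, hYim, Complex.mul_re]
  rw [hρtr, Complex.one_re] at h1 h2
  rw [h4, h3, h1, h2]
  ring

/-- One effect's contribution to `tr (S J) ≤ 1`, for an effect of trace `t` with coordinate vector
`m`, where `q = ρ·m`, `n = |m|²` and `t / 2 + q` is the outcome probability. At zero probability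
the left side is `0` by the division convention. -/
lemma gillMassar_term {t q n : ℝ} (hn : n ≤ t ^ 2 / 2) (hp : 0 ≤ t / 2 + q)
    (hq : 0 ≤ t / 2 - q) : (n / 2 - q ^ 2) / (t / 2 + q) ≤ t / 2 - q := by
  rcases hp.eq_or_lt with h | h
  · rw [← h]; simpa using hq
  · rw [div_le_iff₀ h]; nlinarith

/-- The case `S = s sᵀ` of the part of `adjugate_identity` that is linear in `S`; it is the Gram
determinant of `s, u, v` for the form `J`, expanded along `s`. -/
lemma adjugate_identity_rankOne (J : Matrix (Fin 3) (Fin 3) ℝ) (hJ : J.IsSymm)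
    (s u v x y : Fin 3 → ℝ) (hx : J *ᵥ u = x) (hy : J *ᵥ v = y) :
    (x ⬝ᵥ u) * (s ⬝ᵥ y) ^ 2 + (y ⬝ᵥ v) * (s ⬝ᵥ x) ^ 2 - 2 * (x ⬝ᵥ v) * (s ⬝ᵥ x) * (s ⬝ᵥ y) =
      (s ⬝ᵥ (J *ᵥ s)) * ((x ⬝ᵥ u) * (y ⬝ᵥ v) - (x ⬝ᵥ v) ^ 2) -
        J.det * (s ⬝ᵥ crossProduct u v) ^ 2 := by
  have h01 : J 1 0 = J 0 1 := hJ.apply 0 1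
  have h02 : J 2 0 = J 0 2 := hJ.apply 0 2
  have h12 : J 2 1 = J 1 2 := hJ.apply 1 2
  subst hx hy
  simp only [cross_apply, dotProduct, Matrix.mulVec, Fin.sum_univ_three,
    Matrix.det_fin_three, h01, h02, h12, Matrix.cons_val_zero,
    Matrix.cons_val_one, Matrix.cons_val]
  ring

/-- For symmetric `J` and `S` this is the entrywise form of
`c · (adj (J - J S J) - adj (J S J)) c = (1 - tr (S J)) c · adj(J) c + det J (c · S c)` with
`c = u × v`, for `S = I/2 - r rᵀ`. -/
lemma adjugate_identity (J : Matrix (Fin 3) (Fin 3) ℝ) (hJ : J.IsSymm) (r u v : Fin 3 → ℝ)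
    (x y : Fin 3 → ℝ) (hx : J *ᵥ u = x) (hy : J *ᵥ v = y) :
    (x ⬝ᵥ u - ((x ⬝ᵥ x) / 2 - (r ⬝ᵥ x) ^ 2)) * (y ⬝ᵥ v - ((y ⬝ᵥ y) / 2 - (r ⬝ᵥ y) ^ 2)) -
        (x ⬝ᵥ v - ((x ⬝ᵥ y) / 2 - (r ⬝ᵥ x) * (r ⬝ᵥ y))) ^ 2 -
        (((x ⬝ᵥ x) / 2 - (r ⬝ᵥ x) ^ 2) * ((y ⬝ᵥ y) / 2 - (r ⬝ᵥ y) ^ 2) -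
          ((x ⬝ᵥ y) / 2 - (r ⬝ᵥ x) * (r ⬝ᵥ y)) ^ 2) =
      (1 - (J.trace / 2 - r ⬝ᵥ (J *ᵥ r))) * ((x ⬝ᵥ u) * (y ⬝ᵥ v) - (x ⬝ᵥ v) ^ 2) +
        J.det * ((crossProduct u v ⬝ᵥ crossProduct u v) / 2 - (r ⬝ᵥ crossProduct u v) ^ 2) := by
  have hr := adjugate_identity_rankOne J hJ r u v x y hx hy
  have h0 := adjugate_identity_rankOne J hJ (Pi.single 0 1) u v x y hx hy
  have h1 := adjugate_identity_rankOne J hJ (Pi.single 1 1) u v x y hx hy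
  have h2 := adjugate_identity_rankOne J hJ (Pi.single 2 1) u v x y hx hy
  simp only [single_one_dotProduct, Matrix.mulVec_single_one, Matrix.col_apply] at h0 h1 h2
  have hxx : x ⬝ᵥ x = x 0 ^ 2 + x 1 ^ 2 + x 2 ^ 2 := by
    simp only [dotProduct, Fin.sum_univ_three]; ring
  have hyy : y ⬝ᵥ y = y 0 ^ 2 + y 1 ^ 2 + y 2 ^ 2 := by
    simp only [dotProduct, Fin.sum_univ_three]; ring
  have hxy : x ⬝ᵥ y = x 0 * y 0 + x 1 * y 1 + x 2 * y 2 := by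
    simp only [dotProduct, Fin.sum_univ_three]
  have hcc : crossProduct u v ⬝ᵥ crossProduct u v =
      crossProduct u v 0 ^ 2 + crossProduct u v 1 ^ 2 + crossProduct u v 2 ^ 2 := by
    simp only [dotProduct, Fin.sum_univ_three]; ring
  have htr : J.trace = J 0 0 + J 1 1 + J 2 2 := Matrix.trace_fin_three J
  rw [hxx, hyy, hxy, hcc, htr]
  -- `I/2 - r rᵀ` is half the sum of the coordinate projections minus `r rᵀ`
  linear_combination hr - (h0 + h1 + h2) / 2


/-- For a qubit (`d = 2`), the measurement errors of two non-commuting observables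
for any POVM satisfy the attainable trade-off relation
`ε(X₁;M) ε(X₂;M) ≥ Var(X₁)Var(X₂) − C_s(X₁,X₂)²`. -/
theorem qubit_attainable_tradeoff_all_povm
    (ρ : Matrix (Fin 2) (Fin 2) ℂ)
    (hρ : ρ.PosDef) (hρtr : ρ.trace = 1)
    (Λ : Fin 3 → Matrix (Fin 2) (Fin 2) ℂ)
    (hΛherm : ∀ i, (Λ i).IsHermitian)
    (hΛtrace : ∀ i, (Λ i).trace = 0)
    (hΛortho : ∀ i j, (Λ i * Λ j).trace = if i = j then 1 else 0)
    (hΛspan : ∀ X : Matrix (Fin 2) (Fin 2) ℂ, X.IsHermitian → X.trace = 0 →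
      ∃ c : Fin 3 → ℝ, X = ∑ i, (c i : ℂ) • Λ i)
    (ι : Type) [Fintype ι]
    (M : ι → Matrix (Fin 2) (Fin 2) ℂ)
    (hMpsd : ∀ k, (M k).PosSemidef)
    (hMsum : ∑ k, M k = 1)
    (hMne : ∀ k, M k ≠ 0)
    (X₁ X₂ : Matrix (Fin 2) (Fin 2) ℂ)
    (hX₁ : X₁.IsHermitian) (hX₂ : X₂.IsHermitian)
    (hXcomm : X₁ * X₂ ≠ X₂ * X₁)
    (x₁ x₂ : Fin 3 → ℝ)
    (hx₁ : ∀ i, x₁ i = ((Λ i * X₁).trace).re)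
    (hx₂ : ∀ i, x₂ i = ((Λ i * X₂).trace).re)
    (J : Matrix (Fin 3) (Fin 3) ℝ)
    (hJ : ∀ i j, J i j =
      ∑ k, ((Λ i * M k).trace.re * (Λ j * M k).trace.re) / (ρ * M k).trace.re)
    (u₁ u₂ : Fin 3 → ℝ)
    (hu₁ : J *ᵥ u₁ = x₁) (hu₂ : J *ᵥ u₂ = x₂) :
    (x₁ ⬝ᵥ u₁ - ((ρ * X₁ ^ 2).trace.re - ((ρ * X₁).trace.re) ^ 2)) *
      (x₂ ⬝ᵥ u₂ - ((ρ * X₂ ^ 2).trace.re - ((ρ * X₂).trace.re) ^ 2)) ≥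
    ((ρ * X₁ ^ 2).trace.re - ((ρ * X₁).trace.re) ^ 2) * ((ρ * X₂ ^ 2).trace.re - ((ρ * X₂).trace.re) ^ 2) -
      ((1 / 2) * (ρ * (X₁ * X₂ + X₂ * X₁)).trace.re - (ρ * X₁).trace.re * (ρ * X₂).trace.re) ^ 2 := by
  classical
  set r : Fin 3 → ℝ := fun i => (Λ i * ρ).trace.re with hr
  set m : ι → Fin 3 → ℝ := fun k i => (Λ i * M k).trace.re with hm
  set p : ι → ℝ := fun k => (ρ * M k).trace.re with hpdef
  have parseval := fun {A B : Matrix (Fin 2) (Fin 2) ℂ} (hA : A.IsHermitian)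
    (hB : B.IsHermitian) => trace_mul_re_eq Λ hΛtrace hΛortho hΛspan hA hB
  have hpk : ∀ k, p k = (M k).trace.re / 2 + r ⬝ᵥ m k := by
    intro k
    have h := parseval hρ.isHermitian (hMpsd k).isHermitian
    rw [hρtr, Complex.one_re, one_mul] at h
    exact h
  have hrr : r ⬝ᵥ r ≤ 1 / 2 := by
    have h := parseval hρ.isHermitian hρ.isHermitian
    have h' := trace_sq_re_le hρ.posSemidef
    rw [h, hρtr, Complex.one_re] at h'
    have : r ⬝ᵥ r = ∑ i, (Λ i * ρ).trace.re * (Λ i * ρ).trace.re := rfl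
    linarith
  have hmm : ∀ k, m k ⬝ᵥ m k ≤ (M k).trace.re ^ 2 / 2 := by
    intro k
    have h := parseval (hMpsd k).isHermitian (hMpsd k).isHermitian
    have h' := trace_sq_re_le (hMpsd k)
    rw [h] at h'
    have : m k ⬝ᵥ m k = ∑ i, (Λ i * M k).trace.re * (Λ i * M k).trace.re := rfl
    linarith
  have htr : ∀ k, 0 ≤ (M k).trace.re := fun k =>
    (Complex.le_def.mp (hMpsd k).trace_nonneg).1
  have hcs : ∀ v : Fin 3 → ℝ, (r ⬝ᵥ v) ^ 2 ≤ (v ⬝ᵥ v) / 2 := by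
    intro v
    have h := Finset.sum_mul_sq_le_sq_mul_sq Finset.univ r v
    have hvv : 0 ≤ v ⬝ᵥ v := by
      simp only [dotProduct]
      exact Finset.sum_nonneg fun i _ => mul_self_nonneg _
    have e : (r ⬝ᵥ v) ^ 2 ≤ (r ⬝ᵥ r) * (v ⬝ᵥ v) := by
      simpa only [dotProduct, ← sq] using h
    nlinarith
  have habs : ∀ k, |r ⬝ᵥ m k| ≤ (M k).trace.re / 2 := by
    intro k
    refine abs_le_of_sq_le_sq ?_ (by linarith [htr k])
    nlinarith [hcs (m k), hmm k]
  have hp0 : ∀ k, 0 ≤ p k := fun k => by rw [hpk]; linarith [(abs_le.mp (habs k)).1]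
  have hJ' : ∀ i j, J i j = ∑ k, m k i * m k j / p k := hJ
  have hsymm : J.IsSymm := by
    ext i j
    rw [Matrix.transpose_apply, hJ', hJ']
    exact Finset.sum_congr rfl fun k _ => by ring
  -- the bilinear form of `J` as a weighted sum over outcomes
  have hform : ∀ v w : Fin 3 → ℝ,
      (J *ᵥ v) ⬝ᵥ w = ∑ k, (m k ⬝ᵥ v) * (m k ⬝ᵥ w) / p k := by
    intro v w
    simp only [dotProduct, Matrix.mulVec, Fin.sum_univ_three, hJ', Finset.sum_mul,
      ← Finset.sum_add_distrib]
    exact Finset.sum_congr rfl fun k _ => by ring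
  have hpsd : J.PosSemidef := by
    refine Matrix.PosSemidef.of_dotProduct_mulVec_nonneg ?_ ?_
    · rw [Matrix.IsHermitian, Matrix.conjTranspose_eq_transpose_of_trivial]; exact hsymm
    · intro v
      rw [star_trivial, dotProduct_comm, hform]
      exact Finset.sum_nonneg fun k _ => div_nonneg (mul_self_nonneg _) (hp0 k)
  have hgm : J.trace / 2 - r ⬝ᵥ (J *ᵥ r) ≤ 1 := by
    have e : J.trace / 2 - r ⬝ᵥ (J *ᵥ r) =
        ∑ k, ((m k ⬝ᵥ m k) / 2 - (r ⬝ᵥ m k) ^ 2) / p k := by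
      rw [dotProduct_comm r, hform]
      simp only [Matrix.trace, Matrix.diag_apply, dotProduct, Fin.sum_univ_three, hJ',
        ← Finset.sum_add_distrib, Finset.sum_div, ← Finset.sum_sub_distrib]
      exact Finset.sum_congr rfl fun k _ => by ring
    have hsum_t : ∑ k, (M k).trace.re = 2 := by
      rw [← Complex.re_sum, ← Matrix.trace_sum, hMsum]; simp
    have hsum_p : ∑ k, p k = 1 := by
      simp only [hpdef]
      rw [← Complex.re_sum, ← Matrix.trace_sum, ← Matrix.mul_sum, hMsum, mul_one, hρtr]; simp
    calc J.trace / 2 - r ⬝ᵥ (J *ᵥ r)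
        = ∑ k, ((m k ⬝ᵥ m k) / 2 - (r ⬝ᵥ m k) ^ 2) / p k := e
      _ ≤ ∑ k, ((M k).trace.re - p k) := by
          refine Finset.sum_le_sum fun k _ => ?_
          have hb := abs_le.mp (habs k)
          have h := gillMassar_term (q := r ⬝ᵥ m k) (hmm k) (by linarith [hb.1]) (by linarith [hb.2])
          rw [hpk k]
          linarith
      _ = 1 := by rw [Finset.sum_sub_distrib, hsum_t, hsum_p]; norm_num
  have hgram : 0 ≤ (x₁ ⬝ᵥ u₁) * (x₂ ⬝ᵥ u₂) - (x₁ ⬝ᵥ u₂) ^ 2 := by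
    rw [← hu₁, ← hu₂, hform, hform, hform, sub_nonneg]
    refine Finset.sum_sq_le_sum_mul_sum_of_sq_le_mul _
      (fun k _ => div_nonneg (mul_self_nonneg _) (hp0 k))
      (fun k _ => div_nonneg (mul_self_nonneg _) (hp0 k)) (fun k _ => le_of_eq (by ring))
  have hcov := fun {X Y : Matrix (Fin 2) (Fin 2) ℂ} (hX : X.IsHermitian) (hY : Y.IsHermitian) =>
    covariance_eq Λ hΛtrace hΛortho hΛspan hρ.isHermitian hρtr hX hY
  have hvar : ∀ {X : Matrix (Fin 2) (Fin 2) ℂ}, X.IsHermitian → ∀ x : Fin 3 → ℝ,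
      (∀ i, x i = (Λ i * X).trace.re) →
      (ρ * X ^ 2).trace.re - ((ρ * X).trace.re) ^ 2 = (x ⬝ᵥ x) / 2 - (r ⬝ᵥ x) ^ 2 := by
    intro X hX x hx
    have h := hcov hX hX
    simp only [← hx] at h
    have e : (ρ * (X * X + X * X)).trace.re = 2 * (ρ * X ^ 2).trace.re := by
      rw [← sq, Matrix.mul_add, Matrix.trace_add, Complex.add_re]; ring
    rw [e] at h
    simp only [dotProduct, hr]
    linarith
  have hc12 : (1 / 2) * (ρ * (X₁ * X₂ + X₂ * X₁)).trace.re -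
      (ρ * X₁).trace.re * (ρ * X₂).trace.re = (x₁ ⬝ᵥ x₂) / 2 - (r ⬝ᵥ x₁) * (r ⬝ᵥ x₂) := by
    have h := hcov hX₁ hX₂
    simp only [← hx₁, ← hx₂] at h
    exact h
  rw [hvar hX₁ x₁ hx₁, hvar hX₂ x₂ hx₂, hc12]
  have key := adjugate_identity J hsymm r u₁ u₂ x₁ x₂ hu₁ hu₂
  have t1 := mul_nonneg (sub_nonneg.mpr hgm) hgram
  have t2 := mul_nonneg hpsd.det_nonneg (sub_nonneg.mpr (hcs (crossProduct u₁ u₂)))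
  have t3 := sq_nonneg (x₁ ⬝ᵥ u₂ - ((x₁ ⬝ᵥ x₂) / 2 - (r ⬝ᵥ x₁) * (r ⬝ᵥ x₂)))
  linarith
end

section
/- Let X₁, X₂ be Hermitian d×d matrices such that every d×d complex matrix commuting with both X₁ and X₂ is a scalar multiple of the identity, and let x₁, x₂ be their coordinate vectors. Then there exist q₁, q₂ > 0 with q₁ + q₂ = 1, families P₁ = {P_{1,i}} and P₂ = {P_{2,i}} of pairwise orthogonal d×d projection matrices each summing to I, and vectors u₁, u₂ ∈ ℝ^{d²−1} with J(M)u₁ = x₁ and J(M)u₂ = x₂ for the POVM M with elements {q_ν P_{ν,i}}, such that (x₁·u₁ − Var_ρ(X₁)) · (x₂·u₂ − Var_ρ(X₂)) = Var_ρ(X₁)Var_ρ(X₂) − C_s(X₁,X₂)². That is, the bound of the trade-off relation is attainable by a random projective measurement. -/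
open Matrix BigOperators ComplexOrder

/-!
Put `a = C_s(X₁, X₂) / (2 Var X₁)`, `A₀ = X₁` and `A₁ = X₂ - a X₁`. The measurement that works
performs, with probability `1/2` each, a rank-one projective measurement `P_ν` in an eigenbasis
of `A_ν`.

Let `X = w₀ A₀ + w₁ A₁` have coordinates `x`. The symmetric matrix `J` only kills traceless
Hermitian `Y` with `Tr (Y P_{ν,k}) = 0` for all `ν, k`, and `X` lies in the span of the `P_{ν,k}`,
so `x` is orthogonal to `ker J` and `J u = x` is solvable. Let `U` be the traceless matrix with
coordinates `u`, and put `g_{ν,k} = Tr (U P_{ν,k}) / Tr (ρ P_{ν,k})`. The equation `J u = x` says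
that the matrices `Z_ν = ∑ₖ (g_{ν,k} / 2) P_{ν,k} - w_ν A_ν` have a scalar sum. Since `Z_ν`
commutes with `A_ν`, each `Z_ν` then commutes with both `A₀` and `A₁`, so irreducibility makes it
scalar. As `Tr U = 0`, the scalar is `-w_ν Tr (ρ A_ν)`, and hence
`x · u = 2 (w₀² Var A₀ + w₁² Var A₁)` (`exists_solution`).

For `X₁` the weights are `(1, 0)` and the error is `Var X₁`. For `X₂` they are `(a, 1)`, and the
choice of `a` gives `Var X₁` times the error equal to `Var X₁ Var X₂ - C_s(X₁, X₂)²`. If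
`Var X₁ = 0`, faithfulness of `ρ` forces `X₁` to be scalar, so the covariance vanishes as well and
the same computation applies.
-/

/-! ### Linear algebra -/

/-- Rank-one spectral decomposition of a Hermitian matrix; every outcome of the corresponding
measurement has positive probability in a faithful state. -/
lemma exists_spectral_projections {d : ℕ} {A : Matrix (Fin d) (Fin d) ℂ} (hA : A.IsHermitian) :
    ∃ (P : Fin d → Matrix (Fin d) (Fin d) ℂ) (α : Fin d → ℝ),
      (∀ k, (P k).IsHermitian) ∧ (∀ i j, P i * P j = if i = j then P i else 0) ∧
      (∑ k, P k = 1) ∧ (∀ k, (P k).trace = 1) ∧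
      (∀ ρ : Matrix (Fin d) (Fin d) ℂ, ρ.PosDef → ∀ k, 0 < (ρ * P k).trace.re) ∧
      A = ∑ k, (α k : ℂ) • P k := by
  set V : Matrix (Fin d) (Fin d) ℂ := (hA.eigenvectorUnitary : Matrix (Fin d) (Fin d) ℂ) with hV
  have hVV : Vᴴ * V = 1 := by
    have := Unitary.coe_star_mul_self hA.eigenvectorUnitary
    simpa [hV, star_eq_conjTranspose] using this
  have hVV' : V * Vᴴ = 1 := mul_eq_one_comm.mp hVV
  refine ⟨fun k => V * single k k 1 * Vᴴ, hA.eigenvalues, ?_, ?_, ?_, ?_, ?_, ?_⟩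
  · intro k
    simp [IsHermitian, conjTranspose_mul, Matrix.mul_assoc]
  · intro i j
    have : V * single i i (1:ℂ) * Vᴴ * (V * single j j 1 * Vᴴ)
        = V * (single i i 1 * (Vᴴ * V) * single j j 1) * Vᴴ := by
      simp only [Matrix.mul_assoc]
    rw [this, hVV, Matrix.mul_one]
    split_ifs with h
    · subst h; simp
    · simp [h]
  · rw [← Finset.sum_mul, ← Finset.mul_sum]
    have : ∑ k : Fin d, single k k (1:ℂ) = 1 := by
      rw [sum_single_eq_diagonal, diagonal_one]
    rw [this, Matrix.mul_one, hVV']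
  · intro k
    rw [trace_mul_comm, ← Matrix.mul_assoc, hVV, Matrix.one_mul]
    simp
  · intro ρ hρ k
    have h1 : (Vᴴ * ρ * V).PosDef := by
      refine hρ.conjTranspose_mul_mul_same ?_
      intro a b hab
      have := congrArg (fun v => Vᴴ *ᵥ v) hab
      simpa [hVV] using this
    have h2 := h1.diag_pos (i := k)
    have h3 : (ρ * (V * single k k 1 * Vᴴ)).trace = (Vᴴ * ρ * V) k k := by
      rw [← Matrix.mul_assoc, trace_mul_comm, ← Matrix.mul_assoc, ← Matrix.mul_assoc,
        trace_mul_single]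
      simp
    rw [h3]
    exact (Complex.pos_iff.mp h2).1
  · conv_lhs => rw [hA.spectral_theorem]
    rw [Unitary.conjStarAlgAut_apply]
    have : diagonal (RCLike.ofReal ∘ hA.eigenvalues : Fin d → ℂ)
        = ∑ k, (hA.eigenvalues k : ℂ) • single k k (1:ℂ) := by
      rw [← sum_single_eq_diagonal]
      simp [smul_single]
    rw [this]
    simp only [Matrix.mul_sum, Matrix.sum_mul, ← hV, star_eq_conjTranspose, Matrix.mul_smul,
      Matrix.smul_mul]

/-- For a symmetric matrix, the range is the orthogonal complement of the kernel. -/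
lemma exists_mulVec_of_orthogonal_ker {n : ℕ} (J : Matrix (Fin n) (Fin n) ℝ) (hJ : J.IsSymm)
    (x : Fin n → ℝ) (hx : ∀ y, J *ᵥ y = 0 → x ⬝ᵥ y = 0) : ∃ u, J *ᵥ u = x := by
  have hmem : dotProductBilin ℝ ℝ x ∈ (LinearMap.ker J.mulVecLin).dualAnnihilator := by
    rw [Submodule.mem_dualAnnihilator]
    intro y hy
    exact hx y (by simpa using hy)
  rw [← LinearMap.range_dualMap_eq_dualAnnihilator_ker] at hmem
  obtain ⟨φ, hφ⟩ := hmem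
  refine ⟨fun i => φ (Pi.single i 1), ?_⟩
  ext i
  have h := LinearMap.congr_fun hφ (Pi.single i 1)
  have hl : ∀ v : Fin n → ℝ, φ v = ∑ j, v j * φ (Pi.single j 1) := by
    intro v
    conv_lhs => rw [pi_eq_sum_univ' v]
    simp [map_sum]
  simp only [LinearMap.dualMap_apply, mulVecLin_apply, mulVec_single_one] at h
  rw [hl] at h
  have h' : (dotProductBilin ℝ ℝ x) (Pi.single i 1) = x i := by
    simp [dotProductBilin]
  rw [h'] at h
  rw [← h]
  simp only [mulVec, dotProduct, col_apply]
  exact Finset.sum_congr rfl fun j _ => by rw [hJ.apply]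

/-! ### Traces, variance and covariance -/

/-- The variance of the observable `X` in the state `ρ`. -/
noncomputable def qVar {d : ℕ} (ρ X : Matrix (Fin d) (Fin d) ℂ) : ℝ :=
  (ρ * X ^ 2).trace.re - ((ρ * X).trace.re) ^ 2

lemma re_trace_mul_sum {d : ℕ} {ι : Type*} (s : Finset ι) (Y : Matrix (Fin d) (Fin d) ℂ) (c : ι → ℝ)
    (P : ι → Matrix (Fin d) (Fin d) ℂ) :
    (Y * ∑ k ∈ s, (c k : ℂ) • P k).trace.re = ∑ k ∈ s, c k * (Y * P k).trace.re := by
  simp [Matrix.mul_sum, trace_sum]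

lemma re_trace_sum_mul {d : ℕ} {ι : Type*} (s : Finset ι) (Y : Matrix (Fin d) (Fin d) ℂ) (c : ι → ℝ)
    (P : ι → Matrix (Fin d) (Fin d) ℂ) :
    ((∑ k ∈ s, (c k : ℂ) • P k) * Y).trace.re = ∑ k ∈ s, c k * (P k * Y).trace.re := by
  simp [Matrix.sum_mul, trace_sum]

lemma sum_smul_mul_sum_smul {d : ℕ} {P : Fin d → Matrix (Fin d) (Fin d) ℂ}
    (hP : ∀ i j, P i * P j = if i = j then P i else 0) (a b : Fin d → ℂ) :
    (∑ k, a k • P k) * (∑ k, b k • P k) = ∑ k, (a k * b k) • P k := by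
  simp [Matrix.sum_mul, Matrix.mul_sum, hP, smul_smul, mul_comm]

lemma qVar_eq_sum {d : ℕ} {ρ A : Matrix (Fin d) (Fin d) ℂ} {P : Fin d → Matrix (Fin d) (Fin d) ℂ}
    (hP : ∀ i j, P i * P j = if i = j then P i else 0) {α : Fin d → ℝ}
    (hA : A = ∑ k, (α k : ℂ) • P k) :
    qVar ρ A = ∑ k, α k ^ 2 * (ρ * P k).trace.re - (∑ k, α k * (ρ * P k).trace.re) ^ 2 := by
  have h2 : A ^ 2 = ∑ k, ((α k ^ 2 : ℝ) : ℂ) • P k := by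
    rw [sq, hA, sum_smul_mul_sum_smul hP]
    simp [sq]
  rw [qVar, h2, hA, re_trace_mul_sum, re_trace_mul_sum]

/-- The symmetrized covariance of `X` and `Y` in the state `ρ`. -/
noncomputable def qCov {d : ℕ} (ρ X Y : Matrix (Fin d) (Fin d) ℂ) : ℝ :=
  (1 / 2) * (ρ * (X * Y + Y * X)).trace.re - (ρ * X).trace.re * (ρ * Y).trace.re

lemma qVar_sub_smul {d : ℕ} (ρ X Y : Matrix (Fin d) (Fin d) ℂ) (a : ℝ) :
    qVar ρ (Y - (a : ℂ) • X) = qVar ρ Y - 2 * a * qCov ρ X Y + a ^ 2 * qVar ρ X := by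
  have h : (Y - (a : ℂ) • X) ^ 2
      = Y ^ 2 - (a : ℂ) • (X * Y + Y * X) + ((a ^ 2 : ℝ) : ℂ) • X ^ 2 := by
    simp only [sq, Matrix.sub_mul, Matrix.mul_sub, Matrix.smul_mul, Matrix.mul_smul, mul_smul,
      smul_add, smul_sub, Complex.ofReal_mul]
    abel
  simp only [qVar, qCov, h, Matrix.mul_add, Matrix.mul_sub, Matrix.mul_smul, trace_add, trace_sub,
    trace_smul, Complex.add_re, Complex.sub_re, smul_eq_mul, Complex.re_ofReal_mul]
  ring

/-- In a faithful state an observable of zero variance is a multiple of the identity, hence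
uncorrelated with every other observable. -/
lemma qCov_eq_zero_of_qVar_eq_zero {d : ℕ} {ρ X : Matrix (Fin d) (Fin d) ℂ} (hρ : ρ.PosDef)
    (hρtr : ρ.trace = 1) (hX : X.IsHermitian) (h0 : qVar ρ X = 0)
    (Y : Matrix (Fin d) (Fin d) ℂ) : qCov ρ X Y = 0 := by
  obtain ⟨P, α, -, horth, hsum, -, hpos, hXP⟩ := exists_spectral_projections hX
  have hp := hpos ρ hρ
  have hpsum : ∑ k, (ρ * P k).trace.re = 1 := by
    rw [← Complex.re_sum, ← trace_sum, ← Finset.mul_sum, hsum]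
    simp [hρtr]
  rw [qVar_eq_sum horth hXP] at h0
  set m := ∑ k, α k * (ρ * P k).trace.re with hm
  clear_value m
  have h1 : ∑ k, (α k - m) ^ 2 * (ρ * P k).trace.re = 0 := by
    rw [← h0]
    have : ∑ k, (α k - m) ^ 2 * (ρ * P k).trace.re = ∑ k, α k ^ 2 * (ρ * P k).trace.re
        - 2 * m * ∑ k, α k * (ρ * P k).trace.re + m ^ 2 * ∑ k, (ρ * P k).trace.re := by
      rw [Finset.mul_sum, Finset.mul_sum, ← Finset.sum_sub_distrib, ← Finset.sum_add_distrib]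
      exact Finset.sum_congr rfl fun k _ => by ring
    rw [this, hpsum, ← hm]
    ring
  have h2 : ∀ k, α k = m := by
    intro k
    have := (Finset.sum_eq_zero_iff_of_nonneg (fun k _ =>
      mul_nonneg (sq_nonneg (α k - m)) (hp k).le)).mp h1 k (Finset.mem_univ _)
    simpa [(hp k).ne', sub_eq_zero] using this
  have hXm : X = (m : ℂ) • (1 : Matrix (Fin d) (Fin d) ℂ) := by
    rw [hXP, ← hsum, Finset.smul_sum]
    exact Finset.sum_congr rfl fun k _ => by rw [h2]
  rw [qCov, hXm]
  simp [Matrix.mul_add, hρtr]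
  ring

/-! ### Solving `J u = x` for the equal mixture of two projective measurements -/

/-- A Hermitian matrix all of whose coordinates vanish is a multiple of the identity. -/
lemma eq_smul_one_of_coord_eq_zero {d : ℕ} (hd : 2 ≤ d) {n : ℕ}
    {Λ : Fin n → Matrix (Fin d) (Fin d) ℂ}
    (hΛtrace : ∀ i, (Λ i).trace = 0)
    (hΛortho : ∀ i j, (Λ i * Λ j).trace = if i = j then 1 else 0)
    (hΛspan : ∀ X : Matrix (Fin d) (Fin d) ℂ, X.IsHermitian → X.trace = 0 →
      ∃ c : Fin n → ℝ, X = ∑ i, (c i : ℂ) • Λ i)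
    {W : Matrix (Fin d) (Fin d) ℂ} (hW : W.IsHermitian) (h0 : ∀ i, (Λ i * W).trace.re = 0) :
    ∃ c : ℂ, W = c • (1 : Matrix (Fin d) (Fin d) ℂ) := by
  have hd0 : (d : ℂ) ≠ 0 := by
    have : d ≠ 0 := by omega
    exact_mod_cast this
  have hreal : star W.trace = W.trace := by
    rw [← trace_conjTranspose, hW.eq]
  obtain ⟨c, hc⟩ := hΛspan (W - (W.trace / d) • (1 : Matrix (Fin d) (Fin d) ℂ))
    (by
      rw [IsHermitian, conjTranspose_sub, hW.eq, conjTranspose_smul, conjTranspose_one,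
        star_div₀, hreal]
      simp)
    (by simp [hd0])
  have hc0 : ∀ i, c i = 0 := by
    intro i
    have h1 : (Λ i * (W - (W.trace / d) • (1 : Matrix (Fin d) (Fin d) ℂ))).trace.re = 0 := by
      simp [Matrix.mul_sub, hΛtrace, h0]
    rw [hc, re_trace_mul_sum] at h1
    simpa [hΛortho, apply_ite Complex.re] using h1
  exact ⟨W.trace / d, by simpa [hc0, sub_eq_zero] using hc⟩

/-- `P ν` is a rank-one measurement diagonalizing `A ν` for `ν = 0, 1`, and `J` is the Fisher
information matrix of the mixture of `P 0` and `P 1` with weights `1/2`. For an observable in the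
span of `A 0` and `A 1`, irreducibility of the pair determines the estimator, hence `x · u`. -/
lemma exists_solution {d : ℕ} (hd : 2 ≤ d) {n : ℕ} {ρ : Matrix (Fin d) (Fin d) ℂ}
    (hρtr : ρ.trace = 1)
    {Λ : Fin n → Matrix (Fin d) (Fin d) ℂ}
    (hΛtrace : ∀ i, (Λ i).trace = 0)
    (hΛortho : ∀ i j, (Λ i * Λ j).trace = if i = j then 1 else 0)
    (hΛspan : ∀ X : Matrix (Fin d) (Fin d) ℂ, X.IsHermitian → X.trace = 0 →
      ∃ c : Fin n → ℝ, X = ∑ i, (c i : ℂ) • Λ i)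
    {P : Fin 2 → Fin d → Matrix (Fin d) (Fin d) ℂ}
    (hPherm : ∀ ν k, (P ν k).IsHermitian)
    (hPorth : ∀ ν i j, P ν i * P ν j = if i = j then P ν i else 0)
    (hPsum : ∀ ν, ∑ k, P ν k = 1)
    (hPtr : ∀ ν k, (P ν k).trace = 1)
    (hPpos : ∀ ν k, 0 < (ρ * P ν k).trace.re)
    {α : Fin 2 → Fin d → ℝ} {A : Fin 2 → Matrix (Fin d) (Fin d) ℂ}
    (hA : ∀ ν, A ν = ∑ k, (α ν k : ℂ) • P ν k)
    (hirr : ∀ Z : Matrix (Fin d) (Fin d) ℂ, (∀ ν, Z * A ν = A ν * Z) →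
      ∃ c : ℂ, Z = c • (1 : Matrix (Fin d) (Fin d) ℂ))
    {J : Matrix (Fin n) (Fin n) ℝ}
    (hJ : ∀ i j, J i j = ∑ ν, ∑ k, (1 / 2) *
      ((Λ i * P ν k).trace.re * (Λ j * P ν k).trace.re / (ρ * P ν k).trace.re))
    {X : Matrix (Fin d) (Fin d) ℂ} {w : Fin 2 → ℝ} (hX : X = ∑ ν, (w ν : ℂ) • A ν)
    {x : Fin n → ℝ} (hx : ∀ i, x i = (Λ i * X).trace.re) :
    ∃ u, J *ᵥ u = x ∧ x ⬝ᵥ u = 2 * ∑ ν, w ν ^ 2 * qVar ρ (A ν) := by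
  have hJsymm : J.IsSymm := by
    ext i j
    simp only [transpose_apply, hJ]
    exact Finset.sum_congr rfl fun ν _ => Finset.sum_congr rfl fun k _ => by ring
  -- `T y ν k = Tr (Y P_{ν,k})` for the traceless Hermitian `Y` with coordinates `y`.
  let T : (Fin n → ℝ) → Fin 2 → Fin d → ℝ := fun y ν k =>
    ∑ i, y i * (Λ i * P ν k).trace.re
  have hxdot : ∀ y, x ⬝ᵥ y = ∑ ν, w ν * ∑ k, α ν k * T y ν k := by
    intro y
    have h1 : x ⬝ᵥ y = ((∑ i, (y i : ℂ) • Λ i) * X).trace.re := by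
      rw [re_trace_sum_mul]
      exact Finset.sum_congr rfl fun i _ => by rw [hx]; ring
    rw [h1, hX, re_trace_mul_sum]
    refine Finset.sum_congr rfl fun ν _ => ?_
    rw [hA, re_trace_mul_sum]
    congr 1
    refine Finset.sum_congr rfl fun k _ => ?_
    rw [re_trace_sum_mul]
  have hJv : ∀ y i, (J *ᵥ y) i =
      ∑ ν, ∑ k, (1 / 2) * (T y ν k / (ρ * P ν k).trace.re) * (Λ i * P ν k).trace.re := by
    intro y i
    simp only [mulVec, dotProduct, hJ, T, Finset.sum_mul, Finset.sum_div, Finset.mul_sum]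
    rw [Finset.sum_comm]
    refine Finset.sum_congr rfl fun ν _ => ?_
    rw [Finset.sum_comm]
    exact Finset.sum_congr rfl fun k _ => Finset.sum_congr rfl fun j _ => by ring
  have hker : ∀ y, J *ᵥ y = 0 → x ⬝ᵥ y = 0 := by
    intro y hy
    have h0 : ∑ ν, ∑ k, (1 / 2) * (T y ν k ^ 2 / (ρ * P ν k).trace.re) = 0 := by
      have : y ⬝ᵥ (J *ᵥ y) = 0 := by rw [hy, dotProduct_zero]
      rw [← this]
      symm
      simp only [dotProduct, hJv, Finset.mul_sum]
      rw [Finset.sum_comm]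
      refine Finset.sum_congr rfl fun ν _ => ?_
      rw [Finset.sum_comm]
      refine Finset.sum_congr rfl fun k _ => ?_
      have : ∀ i, y i * ((1 / 2) * (T y ν k / (ρ * P ν k).trace.re) * (Λ i * P ν k).trace.re)
        = ((1 / 2) * (T y ν k / (ρ * P ν k).trace.re)) * (y i * (Λ i * P ν k).trace.re) := by
        intro i; ring
      simp only [this, ← Finset.mul_sum]
      change _ * T y ν k = _
      ring
    have hT : ∀ ν k, T y ν k = 0 := by
      intro ν k
      have hnn : ∀ ν k, 0 ≤ (1 / 2) * (T y ν k ^ 2 / (ρ * P ν k).trace.re) := fun ν k => by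
        have := hPpos ν k
        positivity
      have hnn' : ∀ ν ∈ Finset.univ,
          0 ≤ ∑ k, (1 / 2) * (T y ν k ^ 2 / (ρ * P ν k).trace.re) :=
        fun ν _ => Finset.sum_nonneg fun k _ => hnn ν k
      have h1 := (Finset.sum_eq_zero_iff_of_nonneg hnn').mp h0 ν (Finset.mem_univ _)
      have h2 := (Finset.sum_eq_zero_iff_of_nonneg (s := Finset.univ)
        (fun k _ => hnn ν k)).mp h1 k (Finset.mem_univ _)
      simpa [(hPpos ν k).ne'] using h2
    simp [hxdot, hT]
  obtain ⟨u, hu⟩ := exists_mulVec_of_orthogonal_ker J hJsymm x hker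
  refine ⟨u, hu, ?_⟩
  set g : Fin 2 → Fin d → ℝ := fun ν k => T u ν k / (ρ * P ν k).trace.re with hg
  -- `Z ν` is the difference between the `P ν`-part of the estimator and that of `X`.
  let Z : Fin 2 → Matrix (Fin d) (Fin d) ℂ := fun ν =>
    ∑ k, ((1 / 2 * g ν k - w ν * α ν k : ℝ) : ℂ) • P ν k
  have hZ : ∀ ν, Z ν = ∑ k, ((1 / 2 * g ν k : ℝ) : ℂ) • P ν k - (w ν : ℂ) • A ν := by
    intro ν
    simp only [Z, hA, Finset.smul_sum, ← Finset.sum_sub_distrib, smul_smul, ← sub_smul]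
    exact Finset.sum_congr rfl fun k _ => by push_cast; rfl
  have hZherm : ∀ ν, (Z ν).IsHermitian := by
    intro ν
    simp only [Z, IsHermitian, conjTranspose_sum, conjTranspose_smul, (hPherm ν _).eq]
    simp
  have hZA : ∀ ν, Z ν * A ν = A ν * Z ν := by
    intro ν
    rw [hA, sum_smul_mul_sum_smul (hPorth ν), sum_smul_mul_sum_smul (hPorth ν)]
    simp only [mul_comm]
  obtain ⟨c, hc⟩ : ∃ c : ℂ, Z 0 + Z 1 = c • (1 : Matrix (Fin d) (Fin d) ℂ) := by
    refine eq_smul_one_of_coord_eq_zero hd hΛtrace hΛortho hΛspan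
      ((hZherm 0).add (hZherm 1)) fun i => ?_
    have h1 := congrFun hu i
    rw [hJv, hx, hX, re_trace_mul_sum, Fin.sum_univ_two, Fin.sum_univ_two] at h1
    have h2 : ∀ ν, (Λ i * Z ν).trace.re = ∑ k, 1 / 2 * g ν k * (Λ i * P ν k).trace.re
        - w ν * (Λ i * A ν).trace.re := by
      intro ν
      rw [hZ, Matrix.mul_sub, trace_sub, Complex.sub_re, re_trace_mul_sum]
      simp
    rw [Matrix.mul_add, trace_add, Complex.add_re, h2, h2]
    linarith
  have hZscalar : ∀ ν, ∃ c : ℂ, Z ν = c • (1 : Matrix (Fin d) (Fin d) ℂ) := by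
    have h1 : Z 1 = c • (1 : Matrix (Fin d) (Fin d) ℂ) - Z 0 := by rw [← hc]; abel
    obtain ⟨c0, hc0⟩ := hirr (Z 0) (by
      intro ν
      fin_cases ν
      · exact hZA 0
      · have h2 := hZA 1
        rw [h1, Matrix.sub_mul, Matrix.mul_sub] at h2
        simpa using h2)
    intro ν
    fin_cases ν
    · exact ⟨c0, hc0⟩
    · exact ⟨c - c0, by change Z 1 = _; rw [h1, hc0, sub_smul]⟩
  have hsumT : ∀ ν, ∑ k, T u ν k = 0 := by
    intro ν
    simp only [T]
    rw [Finset.sum_comm]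
    refine Finset.sum_eq_zero fun i _ => ?_
    rw [← Finset.mul_sum, ← Complex.re_sum, ← trace_sum, ← Finset.mul_sum, hPsum]
    simp [hΛtrace]
  have hTg : ∀ ν k, T u ν k = g ν k * (ρ * P ν k).trace.re := fun ν k => by
    simp only [hg]
    rw [div_mul_cancel₀ _ (hPpos ν k).ne']
  have hpsum : ∀ ν, ∑ k, (ρ * P ν k).trace.re = 1 := by
    intro ν
    rw [← Complex.re_sum, ← trace_sum, ← Finset.mul_sum, hPsum]
    simp [hρtr]
  rw [hxdot, Finset.mul_sum]
  refine Finset.sum_congr rfl fun ν _ => ?_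
  obtain ⟨s, hs⟩ := hZscalar ν
  have hgs : ∀ k, g ν k = 2 * (w ν * α ν k + s.re) := by
    intro k
    have h1 : (Z ν * P ν k).trace.re = (s • P ν k).trace.re := by rw [hs]; simp
    simp only [Z] at h1
    rw [re_trace_sum_mul] at h1
    simp [hPorth, hPtr, apply_ite Matrix.trace, apply_ite Complex.re] at h1
    linarith
  set m := ∑ k, α ν k * (ρ * P ν k).trace.re with hm
  have hsm : s.re = - (w ν * m) := by
    have h1 := hsumT ν
    simp only [hTg, hgs] at h1
    have h2 : ∑ k, 2 * (w ν * α ν k + s.re) * (ρ * P ν k).trace.re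
        = 2 * w ν * m + 2 * s.re * ∑ k, (ρ * P ν k).trace.re := by
      rw [hm, Finset.mul_sum, Finset.mul_sum, ← Finset.sum_add_distrib]
      exact Finset.sum_congr rfl fun k _ => by ring
    rw [h2, hpsum] at h1
    linarith
  rw [qVar_eq_sum (hPorth ν) (hA ν), ← hm]
  have h3 : ∑ k, α ν k * T u ν k
      = 2 * w ν * ∑ k, α ν k ^ 2 * (ρ * P ν k).trace.re + 2 * s.re * m := by
    rw [hm, Finset.mul_sum, Finset.mul_sum, ← Finset.sum_add_distrib]
    exact Finset.sum_congr rfl fun k _ => by rw [hTg, hgs]; ring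
  rw [h3, hsm]
  ring

/-! ### Attainability -/

/-- Attainability: for any state and any pair of observables with trivial commutant,
there is a random projective measurement whose measurement errors achieve the bound
`ε(X₁;M) ε(X₂;M) = Var(X₁)Var(X₂) − C_s(X₁,X₂)²`. -/
theorem attainability_of_tradeoff_bound
    (d : ℕ) (hd : 2 ≤ d)
    (ρ : Matrix (Fin d) (Fin d) ℂ)
    (hρ : ρ.PosDef) (hρtr : ρ.trace = 1)
    (Λ : Fin (d ^ 2 - 1) → Matrix (Fin d) (Fin d) ℂ)
    (hΛherm : ∀ i, (Λ i).IsHermitian)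
    (hΛtrace : ∀ i, (Λ i).trace = 0)
    (hΛortho : ∀ i j, (Λ i * Λ j).trace = if i = j then 1 else 0)
    (hΛspan : ∀ X : Matrix (Fin d) (Fin d) ℂ, X.IsHermitian → X.trace = 0 →
      ∃ c : Fin (d ^ 2 - 1) → ℝ, X = ∑ i, (c i : ℂ) • Λ i)
    (X₁ X₂ : Matrix (Fin d) (Fin d) ℂ)
    (hX₁ : X₁.IsHermitian) (hX₂ : X₂.IsHermitian)
    (hirr : ∀ Z : Matrix (Fin d) (Fin d) ℂ, Z * X₁ = X₁ * Z → Z * X₂ = X₂ * Z →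
      ∃ c : ℂ, Z = c • (1 : Matrix (Fin d) (Fin d) ℂ))
    (x₁ x₂ : Fin (d ^ 2 - 1) → ℝ)
    (hx₁ : ∀ i, x₁ i = ((Λ i * X₁).trace).re)
    (hx₂ : ∀ i, x₂ i = ((Λ i * X₂).trace).re) :
    ∃ (q : Fin 2 → ℝ) (P : Fin 2 → Fin d → Matrix (Fin d) (Fin d) ℂ)
      (J : Matrix (Fin (d ^ 2 - 1)) (Fin (d ^ 2 - 1)) ℝ)
      (u₁ u₂ : Fin (d ^ 2 - 1) → ℝ),
      (∀ ν, 0 < q ν) ∧ q 0 + q 1 = 1 ∧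
      (∀ ν i, (P ν i).IsHermitian) ∧
      (∀ ν i j, P ν i * P ν j = if i = j then P ν i else 0) ∧
      (∀ ν, ∑ i, P ν i = 1) ∧
      (∀ i j, J i j = ∑ ν, ∑ k,
        ((Λ i * ((q ν : ℂ) • P ν k)).trace.re * (Λ j * ((q ν : ℂ) • P ν k)).trace.re) /
          (ρ * ((q ν : ℂ) • P ν k)).trace.re) ∧
      J *ᵥ u₁ = x₁ ∧ J *ᵥ u₂ = x₂ ∧
      (x₁ ⬝ᵥ u₁ - ((ρ * X₁ ^ 2).trace.re - ((ρ * X₁).trace.re) ^ 2)) *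
        (x₂ ⬝ᵥ u₂ - ((ρ * X₂ ^ 2).trace.re - ((ρ * X₂).trace.re) ^ 2)) =
      ((ρ * X₁ ^ 2).trace.re - ((ρ * X₁).trace.re) ^ 2) * ((ρ * X₂ ^ 2).trace.re - ((ρ * X₂).trace.re) ^ 2) -
        ((1 / 2) * (ρ * (X₁ * X₂ + X₂ * X₁)).trace.re - (ρ * X₁).trace.re * (ρ * X₂).trace.re) ^ 2 := by
  obtain ⟨P₀, α₀, hh₀, ho₀, hs₀, ht₀, hp₀, hXP₀⟩ := exists_spectral_projections hX₁
  -- With this `a` the errors of the mixture come from a bilinear form for which `X₁` and `X₂` are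
  -- orthogonal. If `Var X₁ = 0`, division by zero makes `a = 0`, which is harmless.
  set a : ℝ := qCov ρ X₁ X₂ / (2 * qVar ρ X₁) with ha
  have hB : (X₂ - (a : ℂ) • X₁).IsHermitian := by
    simp [IsHermitian, hX₁.eq, hX₂.eq]
  obtain ⟨P₁, α₁, hh₁, ho₁, hs₁, ht₁, hp₁, hXP₁⟩ := exists_spectral_projections hB
  have haV : 2 * a * qVar ρ X₁ = qCov ρ X₁ X₂ := by
    by_cases h : qVar ρ X₁ = 0
    · rw [h, qCov_eq_zero_of_qVar_eq_zero hρ hρtr hX₁ h]; ring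
    · rw [ha]; field_simp
  have hPherm : ∀ ν k, (![P₀, P₁] ν k).IsHermitian := Fin.forall_fin_two.mpr ⟨hh₀, hh₁⟩
  have hPorth : ∀ ν i j, ![P₀, P₁] ν i * ![P₀, P₁] ν j = if i = j then ![P₀, P₁] ν i else 0 :=
    Fin.forall_fin_two.mpr ⟨ho₀, ho₁⟩
  have hPsum : ∀ ν, ∑ k, ![P₀, P₁] ν k = 1 := Fin.forall_fin_two.mpr ⟨hs₀, hs₁⟩
  have hPtr : ∀ ν k, (![P₀, P₁] ν k).trace = 1 := Fin.forall_fin_two.mpr ⟨ht₀, ht₁⟩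
  have hPpos : ∀ ν k, 0 < (ρ * ![P₀, P₁] ν k).trace.re :=
    Fin.forall_fin_two.mpr ⟨hp₀ ρ hρ, hp₁ ρ hρ⟩
  have hA : ∀ ν, ![X₁, X₂ - (a : ℂ) • X₁] ν
      = ∑ k, ((![α₀, α₁] ν k : ℝ) : ℂ) • ![P₀, P₁] ν k :=
    Fin.forall_fin_two.mpr ⟨hXP₀, hXP₁⟩
  have hirr' : ∀ Z : Matrix (Fin d) (Fin d) ℂ,
      (∀ ν, Z * ![X₁, X₂ - (a : ℂ) • X₁] ν = ![X₁, X₂ - (a : ℂ) • X₁] ν * Z) →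
      ∃ c : ℂ, Z = c • (1 : Matrix (Fin d) (Fin d) ℂ) := by
    intro Z hZ
    have h0 : Z * X₁ = X₁ * Z := hZ 0
    have h1 : Z * (X₂ - (a : ℂ) • X₁) = (X₂ - (a : ℂ) • X₁) * Z := hZ 1
    refine hirr Z h0 ?_
    rw [Matrix.mul_sub, Matrix.sub_mul, Matrix.mul_smul, Matrix.smul_mul, h0] at h1
    exact sub_left_injective h1
  let J : Matrix (Fin (d ^ 2 - 1)) (Fin (d ^ 2 - 1)) ℝ := fun i j => ∑ ν, ∑ k, (1 / 2) *
    ((Λ i * ![P₀, P₁] ν k).trace.re * (Λ j * ![P₀, P₁] ν k).trace.re /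
      (ρ * ![P₀, P₁] ν k).trace.re)
  obtain ⟨u₁, hu₁, hxu₁⟩ := exists_solution hd hρtr hΛtrace hΛortho hΛspan hPherm hPorth
    hPsum hPtr hPpos hA hirr' (J := J) (fun _ _ => rfl) (X := X₁) (w := ![1, 0]) (by simp) hx₁
  obtain ⟨u₂, hu₂, hxu₂⟩ := exists_solution hd hρtr hΛtrace hΛortho hΛspan hPherm hPorth
    hPsum hPtr hPpos hA hirr' (J := J) (fun _ _ => rfl) (X := X₂) (w := ![a, 1]) (by simp) hx₂
  refine ⟨fun _ => 1 / 2, ![P₀, P₁], J, u₁, u₂, fun _ => by norm_num, by norm_num, hPherm, hPorth,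
    hPsum, ?_, hu₁, hu₂, ?_⟩
  · intro i j
    refine Finset.sum_congr rfl fun ν _ => Finset.sum_congr rfl fun k _ => ?_
    have hp := (hPpos ν k).ne'
    simp only [Matrix.mul_smul, trace_smul, smul_eq_mul, Complex.re_ofReal_mul]
    field_simp
  · change (x₁ ⬝ᵥ u₁ - qVar ρ X₁) * (x₂ ⬝ᵥ u₂ - qVar ρ X₂)
      = qVar ρ X₁ * qVar ρ X₂ - qCov ρ X₁ X₂ ^ 2
    have e₁ : x₁ ⬝ᵥ u₁ = 2 * qVar ρ X₁ := by simpa using hxu₁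
    have e₂ : x₂ ⬝ᵥ u₂ = 2 * (a ^ 2 * qVar ρ X₁ + qVar ρ (X₂ - (a : ℂ) • X₁)) := by
      simpa using hxu₂
    rw [e₁, e₂, qVar_sub_smul, ← haV]
    ring
end

section
/- Quantum Cramér–Rao inequality for the right logarithmic derivative: let J_R be the Hermitian (d²−1)×(d²−1) complex matrix with entries [J_R]_{ij} = Tr(λ_j ρ^{-1} λ_i). Then for every POVM M = {M_k} on ℂ^d, the matrix J_R − J(M) is positive semidefinite, i.e., for all v ∈ ℂ^{d²−1}, v† (J_R − J(M)) v ≥ 0, where J(M) is regarded as a complex Hermitian matrix. -/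
/-!
For `v : ℂ^{d²-1}` put `X = ∑ i, v i • Λ i`. Since the `Λ i` are Hermitian,
`v† J_R v = Tr(X ρ⁻¹ X†)`, which splits as `∑ k, Tr(M k X ρ⁻¹ X†)` because the `M k` sum to the
identity, while `v† J(M) v = ∑ k, |Tr(M k X)|² / Tr(ρ M k)`. The claim therefore follows termwise from
the Cauchy–Schwarz inequality `|Tr(M X)|² / Tr(ρ M) ≤ Tr(M X ρ⁻¹ X†)` for a positive semidefinite `M`
(`trace_cauchy_schwarz`), which is the nonnegativity of `Tr(M Y ρ⁻¹ Y†)` at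
`Y = X - t ρ` with `t = Tr(M X) / Tr(ρ M)`.
-/

open Matrix BigOperators ComplexOrder

theorem trace_mul_nonneg_of_posSemidef {n : Type*} [Fintype n] [DecidableEq n]
    {A B : Matrix n n ℂ} (hA : A.PosSemidef) (hB : B.PosSemidef) : 0 ≤ (A * B).trace := by
  open scoped MatrixOrder in
  obtain ⟨C, rfl⟩ := CStarAlgebra.nonneg_iff_eq_star_mul_self.mp hA.nonneg
  rw [star_eq_conjTranspose, Matrix.mul_assoc, Matrix.trace_mul_comm]
  exact (hB.mul_mul_conjTranspose_same C).trace_nonneg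

theorem star_trace_mul_of_isHermitian {n : Type*} [Fintype n]
    {A : Matrix n n ℂ} (hA : A.IsHermitian) (B : Matrix n n ℂ) :
    star (A * B).trace = (A * Bᴴ).trace := by
  rw [← Matrix.trace_conjTranspose, Matrix.conjTranspose_mul, hA.eq, Matrix.trace_mul_comm]

theorem ofReal_re_trace_mul {n : Type*} [Fintype n] {A B : Matrix n n ℂ}
    (hA : A.IsHermitian) (hB : B.IsHermitian) : (((A * B).trace.re : ℝ) : ℂ) = (A * B).trace := by
  have h := star_trace_mul_of_isHermitian hA B
  rw [hB.eq] at h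
  exact Complex.conj_eq_iff_re.mp h

/-- Cauchy–Schwarz for the semi-inner product `(Y, Z) ↦ Tr(M Y ρ⁻¹ Z†)`, applied to `X` and `ρ`.
If `Tr(ρ M) = 0`, the subtracted quotient is `0` by the convention `x / 0 = 0`. -/
theorem trace_cauchy_schwarz {n : Type*} [Fintype n] [DecidableEq n]
    {ρ M : Matrix n n ℂ} (hρ : ρ.PosDef) (hM : M.PosSemidef) (X : Matrix n n ℂ) :
    0 ≤ (M * (X * ρ⁻¹ * Xᴴ)).trace - (M * X).trace * star (M * X).trace / (ρ * M).trace := by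
  have hstar : star (ρ * M).trace = (ρ * M).trace := by
    rw [star_trace_mul_of_isHermitian hρ.isHermitian, hM.isHermitian.eq]
  have hdet : IsUnit ρ.det := (Matrix.isUnit_iff_isUnit_det ρ).mp hρ.isUnit
  have hX := star_trace_mul_of_isHermitian hM.isHermitian X
  have hcomm : (M * ρ).trace = (ρ * M).trace := Matrix.trace_mul_comm _ _
  set p := (ρ * M).trace with hp
  set a := (M * X).trace with ha
  have h := trace_mul_nonneg_of_posSemidef hM
    (hρ.inv.posSemidef.mul_mul_conjTranspose_same (X - (a / p) • ρ))
  have hexp : (X - (a / p) • ρ) * ρ⁻¹ * (X - (a / p) • ρ)ᴴ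
      = X * ρ⁻¹ * Xᴴ - star (a / p) • X - (a / p) • Xᴴ + ((a / p) * star (a / p)) • ρ := by
    have h1 : X * ρ⁻¹ * ρ = X := by
      rw [Matrix.mul_assoc, Matrix.nonsing_inv_mul _ hdet, Matrix.mul_one]
    rw [Matrix.conjTranspose_sub, Matrix.conjTranspose_smul, hρ.isHermitian.eq]
    simp only [Matrix.sub_mul, Matrix.mul_sub, Matrix.smul_mul, Matrix.mul_smul, h1,
      Matrix.mul_nonsing_inv _ hdet, Matrix.one_mul, smul_sub, smul_smul]
    rw [mul_comm (star (a / p))]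
    abel
  rw [hexp] at h
  simp only [Matrix.mul_add, Matrix.mul_sub, Matrix.mul_smul, Matrix.trace_add, Matrix.trace_sub,
    Matrix.trace_smul, smul_eq_mul, hcomm, ← hX, ← ha, star_div₀, hstar] at h
  convert h using 1
  by_cases h0 : p = 0
  · simp [h0]
  · field_simp
    ring

/-- Quantum Cramér–Rao inequality for the right logarithmic derivative:
`J_R − J(M)` is positive semidefinite for every POVM `M`. -/
theorem quantum_cramer_rao_RLD
    (d : ℕ) (hd : 2 ≤ d)
    (ρ : Matrix (Fin d) (Fin d) ℂ)
    (hρ : ρ.PosDef) (hρtr : ρ.trace = 1)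
    (Λ : Fin (d ^ 2 - 1) → Matrix (Fin d) (Fin d) ℂ)
    (hΛherm : ∀ i, (Λ i).IsHermitian)
    (hΛtrace : ∀ i, (Λ i).trace = 0)
    (hΛortho : ∀ i j, (Λ i * Λ j).trace = if i = j then 1 else 0)
    (hΛspan : ∀ X : Matrix (Fin d) (Fin d) ℂ, X.IsHermitian → X.trace = 0 →
      ∃ c : Fin (d ^ 2 - 1) → ℝ, X = ∑ i, (c i : ℂ) • Λ i)
    (ι : Type) [Fintype ι]
    (M : ι → Matrix (Fin d) (Fin d) ℂ)
    (hMpsd : ∀ k, (M k).PosSemidef)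
    (hMsum : ∑ k, M k = 1)
    (hMne : ∀ k, M k ≠ 0)
    (J : Matrix (Fin (d ^ 2 - 1)) (Fin (d ^ 2 - 1)) ℝ)
    (hJ : ∀ i j, J i j =
      ∑ k, ((Λ i * M k).trace.re * (Λ j * M k).trace.re) / (ρ * M k).trace.re)
    (JR : Matrix (Fin (d ^ 2 - 1)) (Fin (d ^ 2 - 1)) ℂ)
    (hJR : ∀ i j, JR i j = (Λ j * ρ⁻¹ * Λ i).trace) :
    (JR - J.map (fun a => (a : ℂ))).PosSemidef := by
  have hJR' : ∀ i j, JR i j = ∑ k, (M k * (Λ j * ρ⁻¹ * Λ i)).trace := by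
    intro i j
    rw [← Matrix.trace_sum, ← Finset.sum_mul, hMsum, Matrix.one_mul, hJR]
  have hJ' : ∀ i j, (J i j : ℂ)
      = ∑ k, (M k * Λ i).trace * (M k * Λ j).trace / (ρ * M k).trace := by
    intro i j
    rw [hJ]
    push_cast
    refine Finset.sum_congr rfl fun k _ => ?_
    rw [ofReal_re_trace_mul (hΛherm i) (hMpsd k).isHermitian,
      ofReal_re_trace_mul (hΛherm j) (hMpsd k).isHermitian,
      ofReal_re_trace_mul hρ.isHermitian (hMpsd k).isHermitian,
      Matrix.trace_mul_comm (Λ i), Matrix.trace_mul_comm (Λ j)]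
  refine Matrix.PosSemidef.of_dotProduct_mulVec_nonneg ?_ fun v => ?_
  · ext i j
    have h1 : star (JR j i) = JR i j := by
      rw [hJR, hJR, ← Matrix.trace_conjTranspose, Matrix.conjTranspose_mul,
        Matrix.conjTranspose_mul, (hΛherm i).eq, (hΛherm j).eq, hρ.inv.isHermitian.eq,
        Matrix.mul_assoc]
    have h2 : J j i = J i j := by
      rw [hJ, hJ]
      exact Finset.sum_congr rfl fun k _ => by rw [mul_comm (Λ j * M k).trace.re]
    rw [Matrix.conjTranspose_apply, Matrix.sub_apply, Matrix.sub_apply, star_sub, h1,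
      Matrix.map_apply, Matrix.map_apply, h2]
    simp
  · have hXH : (∑ j, v j • Λ j)ᴴ = ∑ i, star (v i) • Λ i := by
      rw [Matrix.conjTranspose_sum]
      exact Finset.sum_congr rfl fun i _ => by rw [Matrix.conjTranspose_smul, (hΛherm i).eq]
    have key : star v ⬝ᵥ ((JR - J.map (fun a => (a : ℂ))) *ᵥ v)
        = ∑ k, ((M k * ((∑ j, v j • Λ j) * ρ⁻¹ * (∑ j, v j • Λ j)ᴴ)).trace
          - (M k * ∑ j, v j • Λ j).trace * star (M k * ∑ j, v j • Λ j).trace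
            / (ρ * M k).trace) := by
      have hterm : ∀ k, (M k * ((∑ j, v j • Λ j) * ρ⁻¹ * (∑ j, v j • Λ j)ᴴ)).trace
          - (M k * ∑ j, v j • Λ j).trace * star (M k * ∑ j, v j • Λ j).trace / (ρ * M k).trace
          = ∑ i, ∑ j, star (v i) * (((M k * (Λ j * ρ⁻¹ * Λ i)).trace
            - (M k * Λ i).trace * (M k * Λ j).trace / (ρ * M k).trace) * v j) := by
        intro k
        rw [star_trace_mul_of_isHermitian (hMpsd k).isHermitian, hXH]
        simp only [Finset.mul_sum, Finset.sum_mul, Matrix.trace_sum, Matrix.mul_smul,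
          Matrix.smul_mul, Matrix.trace_smul, smul_eq_mul, Finset.sum_div]
        rw [← Finset.sum_sub_distrib]
        refine Finset.sum_congr rfl fun i _ => ?_
        rw [← Finset.sum_sub_distrib]
        refine Finset.sum_congr rfl fun j _ => ?_
        ring
      simp only [hterm]
      rw [Finset.sum_comm]
      simp only [dotProduct, Matrix.mulVec, Finset.mul_sum]
      refine Finset.sum_congr rfl fun i _ => ?_
      rw [Finset.sum_comm]
      refine Finset.sum_congr rfl fun j _ => ?_
      rw [Matrix.sub_apply, Matrix.map_apply, hJR', hJ', ← Finset.sum_sub_distrib,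
        ← Finset.mul_sum, ← Finset.sum_mul, Pi.star_apply]
    rw [key]
    exact Finset.sum_nonneg fun k _ => trace_cauchy_schwarz hρ (hMpsd k) _
end

section
/- Quantum Cramér–Rao inequality for the symmetric logarithmic derivative: for each i let L_i be the Hermitian d×d matrix solving λ_i = (1/2)(ρL_i + L_iρ), and let J_S be the real symmetric (d²−1)×(d²−1) matrix with entries [J_S]_{ij} = (1/2)Tr(ρ(L_iL_j + L_jL_i)). Then for every POVM M = {M_k} on ℂ^d, the matrix J_S − J(M) is positive semidefinite. -/
/-!
For a real vector `x` put `L = ∑ xᵢ Lᵢ` and `A = ∑ xᵢ λᵢ`, so that `A = (ρL + Lρ)/2`. The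
quadratic forms of `J_S` and `J(M)` at `x` are `Tr(ρL²)` and `∑ₖ (Tr(A Mₖ))² / Tr(ρ Mₖ)`. Each
summand of the latter is at most `Tr(ρ L Mₖ L)` by Cauchy–Schwarz (`sq_div_le_trace`), obtained here
from `Tr(ρ (L - t) Mₖ (L - t)) ≥ 0` at the optimal real `t`; summing over `k` with `∑ₖ Mₖ = 1`
gives `Tr(ρL²)`.
-/

open Matrix BigOperators ComplexOrder

theorem trace_mul_re_nonneg {d : ℕ} {P Q : Matrix (Fin d) (Fin d) ℂ}
    (hP : P.PosSemidef) (hQ : Q.PosSemidef) : 0 ≤ (P * Q).trace.re := by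
  obtain ⟨B, rfl⟩ : ∃ B : Matrix (Fin d) (Fin d) ℂ, P = Bᴴ * B := by
    open scoped MatrixOrder in
    exact CStarAlgebra.nonneg_iff_eq_star_mul_self.mp hP.nonneg
  have h := (hQ.mul_mul_conjTranspose_same B).trace_nonneg
  rw [Matrix.mul_assoc, Matrix.trace_mul_comm]
  exact (Complex.le_def.mp h).1

/-- Cauchy–Schwarz for one POVM element: the classical Fisher information of the outcome `M` along
the direction with logarithmic derivative `L` is at most `Tr(ρ L M L)`. If `Tr(ρM) = 0`, the
quotient is `0` and the bound still holds. -/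
theorem sq_div_le_trace {d : ℕ} {ρ L A M : Matrix (Fin d) (Fin d) ℂ}
    (hρ : ρ.PosSemidef) (hL : L.IsHermitian) (hM : M.PosSemidef)
    (hA : A = (1 / 2 : ℂ) • (ρ * L + L * ρ)) :
    (A * M).trace.re ^ 2 / (ρ * M).trace.re ≤ (ρ * (L * M * L)).trace.re := by
  have key : ∀ t : ℝ, 0 ≤ (ρ * (L * M * L)).trace.re - 2 * t * (A * M).trace.re
      + t ^ 2 * (ρ * M).trace.re := by
    intro t
    have hX : (L - (t : ℂ) • (1 : Matrix (Fin d) (Fin d) ℂ))ᴴ = L - (t : ℂ) • 1 := by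
      simp [hL.eq]
    have h := trace_mul_re_nonneg hρ
      (hM.mul_mul_conjTranspose_same (L - (t : ℂ) • (1 : Matrix (Fin d) (Fin d) ℂ)))
    rw [hX] at h
    have e : (ρ * ((L - (t : ℂ) • 1) * M * (L - (t : ℂ) • 1))).trace
        = (ρ * (L * M * L)).trace - 2 * t * (A * M).trace + t ^ 2 * (ρ * M).trace := by
      have hc : (L * (ρ * M)).trace = (ρ * (M * L)).trace := by
        rw [Matrix.trace_mul_comm, Matrix.mul_assoc]
      simp only [hA, sub_mul, mul_sub, add_mul, smul_mul_assoc, mul_smul_comm, one_mul, mul_one,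
        trace_sub, trace_add, trace_smul, smul_eq_mul, Matrix.mul_assoc, hc]
      ring
    rw [e] at h
    have : ((ρ * (L * M * L)).trace - 2 * t * (A * M).trace + t ^ 2 * (ρ * M).trace).re
        = (ρ * (L * M * L)).trace.re - 2 * t * (A * M).trace.re + t ^ 2 * (ρ * M).trace.re := by
      have e1 : (2 * (t : ℂ)) = ((2 * t : ℝ) : ℂ) := by push_cast; rfl
      have e2 : ((t : ℂ) ^ 2) = ((t ^ 2 : ℝ) : ℂ) := by push_cast; rfl
      rw [e1, e2, Complex.add_re, Complex.sub_re, Complex.re_ofReal_mul, Complex.re_ofReal_mul]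
    rwa [this] at h
  -- The minimizer of the quadratic in `t`; for `Tr(ρM) = 0` it degenerates to `t = 0`.
  have h := key ((A * M).trace.re / (ρ * M).trace.re)
  generalize (A * M).trace.re = a at *
  generalize (ρ * M).trace.re = p at *
  rcases eq_or_ne p 0 with rfl | hp
  · simpa using h
  · have : 2 * (a / p) * a - (a / p) ^ 2 * p = a ^ 2 / p := by field_simp; ring
    linarith

/-- Quantum Cramér–Rao inequality for the symmetric logarithmic derivative:
`J_S − J(M)` is positive semidefinite for every POVM `M`. -/
theorem quantum_cramer_rao_SLD
    (d : ℕ) (hd : 2 ≤ d)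
    (ρ : Matrix (Fin d) (Fin d) ℂ)
    (hρ : ρ.PosDef) (hρtr : ρ.trace = 1)
    (Λ : Fin (d ^ 2 - 1) → Matrix (Fin d) (Fin d) ℂ)
    (hΛherm : ∀ i, (Λ i).IsHermitian)
    (hΛtrace : ∀ i, (Λ i).trace = 0)
    (hΛortho : ∀ i j, (Λ i * Λ j).trace = if i = j then 1 else 0)
    (hΛspan : ∀ X : Matrix (Fin d) (Fin d) ℂ, X.IsHermitian → X.trace = 0 →
      ∃ c : Fin (d ^ 2 - 1) → ℝ, X = ∑ i, (c i : ℂ) • Λ i)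
    (ι : Type) [Fintype ι]
    (M : ι → Matrix (Fin d) (Fin d) ℂ)
    (hMpsd : ∀ k, (M k).PosSemidef)
    (hMsum : ∑ k, M k = 1)
    (hMne : ∀ k, M k ≠ 0)
    (J : Matrix (Fin (d ^ 2 - 1)) (Fin (d ^ 2 - 1)) ℝ)
    (hJ : ∀ i j, J i j =
      ∑ k, ((Λ i * M k).trace.re * (Λ j * M k).trace.re) / (ρ * M k).trace.re)
    (Lop : Fin (d ^ 2 - 1) → Matrix (Fin d) (Fin d) ℂ)
    (hLherm : ∀ i, (Lop i).IsHermitian)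
    (hLeq : ∀ i, Λ i = (1 / 2 : ℂ) • (ρ * Lop i + Lop i * ρ))
    (JS : Matrix (Fin (d ^ 2 - 1)) (Fin (d ^ 2 - 1)) ℝ)
    (hJS : ∀ i j, JS i j = (1 / 2) * (ρ * (Lop i * Lop j + Lop j * Lop i)).trace.re)
    :
    (JS - J).PosSemidef := by
  refine Matrix.PosSemidef.of_dotProduct_mulVec_nonneg ?_ ?_
  · ext i j
    simp only [conjTranspose_apply, Matrix.sub_apply, hJ, hJS, star_trivial]
    rw [add_comm (Lop j * Lop i)]
    simp only [mul_comm (Λ j * M _).trace.re]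
  intro x
  set L := ∑ i, (x i : ℂ) • Lop i with hLdef
  set A := ∑ i, (x i : ℂ) • Λ i with hAdef
  have hL : L.IsHermitian := by
    simp [IsHermitian, hLdef, conjTranspose_sum, (hLherm _).eq]
  have hA : A = (1 / 2 : ℂ) • (ρ * L + L * ρ) := by
    simp only [hAdef, hLdef, hLeq, Finset.mul_sum, Finset.sum_mul, ← Finset.sum_add_distrib,
      Finset.smul_sum, smul_mul_assoc, mul_smul_comm, ← smul_add]
    exact Finset.sum_congr rfl fun i _ => smul_comm _ _ _
  have hAM : ∀ k, (A * M k).trace.re = ∑ i, x i * (Λ i * M k).trace.re := by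
    intro k
    simp [hAdef, Finset.sum_mul, trace_sum]
  have hJx : ∑ i, ∑ j, x i * J i j * x j = ∑ k, (A * M k).trace.re ^ 2 / (ρ * M k).trace.re := by
    simp only [hAM, hJ, sq, Finset.sum_div, Finset.mul_sum, Finset.sum_mul]
    calc _ = ∑ i, ∑ k, ∑ j, x i * (Λ i * M k).trace.re * (x j * (Λ j * M k).trace.re)
          / (ρ * M k).trace.re := by
          refine Finset.sum_congr rfl fun i _ => Finset.sum_comm.trans ?_
          exact Finset.sum_congr rfl fun k _ => Finset.sum_congr rfl fun j _ => by ring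
      _ = ∑ k, ∑ i, ∑ j, x i * (Λ i * M k).trace.re * (x j * (Λ j * M k).trace.re)
          / (ρ * M k).trace.re := Finset.sum_comm
      _ = _ := by
          refine Finset.sum_congr rfl fun k _ => Finset.sum_comm.trans ?_
          exact Finset.sum_congr rfl fun j _ => Finset.sum_congr rfl fun i _ => by ring
  have hJSx : ∑ i, ∑ j, x i * JS i j * x j = (ρ * (L * L)).trace.re := by
    have e : (ρ * (L * L)).trace.re = ∑ i, ∑ j, x i * x j * (ρ * (Lop i * Lop j)).trace.re := by
      simp [hLdef, Finset.sum_mul, Finset.mul_sum, trace_sum, mul_assoc]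
      rw [Finset.sum_comm]
      exact Finset.sum_congr rfl fun i _ => Finset.sum_congr rfl fun j _ => by ring
    have e' : (ρ * (L * L)).trace.re = ∑ i, ∑ j, x i * x j * (ρ * (Lop j * Lop i)).trace.re := by
      rw [e, Finset.sum_comm]
      exact Finset.sum_congr rfl fun i _ => Finset.sum_congr rfl fun j _ => by ring
    have : (ρ * (L * L)).trace.re
        = 1 / 2 * ((ρ * (L * L)).trace.re + (ρ * (L * L)).trace.re) := by ring
    rw [this]
    nth_rewrite 1 [e]
    rw [e']
    simp only [← Finset.sum_add_distrib, Finset.mul_sum, hJS, mul_add, trace_add, Complex.add_re]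
    exact Finset.sum_congr rfl fun i _ => Finset.sum_congr rfl fun j _ => by ring
  have hsum : (ρ * (L * L)).trace.re = ∑ k, (ρ * (L * M k * L)).trace.re := by
    rw [← Complex.re_sum, ← trace_sum, ← Finset.mul_sum, ← Finset.sum_mul, ← Finset.mul_sum,
      hMsum, mul_one]
  have hq : star x ⬝ᵥ ((JS - J) *ᵥ x)
      = ∑ i, ∑ j, x i * JS i j * x j - ∑ i, ∑ j, x i * J i j * x j := by
    simp only [dotProduct, mulVec, star_trivial, Matrix.sub_apply, Finset.mul_sum,
      ← Finset.sum_sub_distrib]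
    exact Finset.sum_congr rfl fun i _ => Finset.sum_congr rfl fun j _ => by ring
  rw [hq, hJx, hJSx, hsum, sub_nonneg]
  exact Finset.sum_le_sum fun k _ => sq_div_le_trace hρ.posSemidef hL (hMpsd k) hA
end

section
/- Existence and uniqueness of the symmetric logarithmic derivative: let ρ be a d×d positive definite Hermitian complex matrix and let A be a d×d Hermitian complex matrix. Then there exists a unique Hermitian d×d matrix L such that A = (1/2)(ρL + Lρ). -/
/-!
In an eigenbasis of `ρ`, with eigenvalues `λ i > 0`, the map `X ↦ ρ X + X ρ` multiplies the
entry `X i j` by `λ i + λ j > 0`, so it is injective; being an endomorphism of a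
finite-dimensional space, it is also surjective. The solution `L` of `ρ L + L ρ = 2 A` is
Hermitian because `Lᴴ` solves the same equation when `ρ` and `A` are Hermitian.
-/

open Matrix BigOperators ComplexOrder

theorem eq_zero_of_posDef_anticommute {d : ℕ} {ρ : Matrix (Fin d) (Fin d) ℂ} (hρ : ρ.PosDef)
    {X : Matrix (Fin d) (Fin d) ℂ} (h : ρ * X + X * ρ = 0) : X = 0 := by
  -- Conjugation by the eigenvector unitary of `ρ`, an algebra automorphism diagonalizing `ρ`.
  let φ := Unitary.conjStarAlgAut ℂ (Matrix (Fin d) (Fin d) ℂ) (star hρ.1.eigenvectorUnitary)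
  have hφ : φ ρ = diagonal (RCLike.ofReal ∘ hρ.1.eigenvalues) :=
    hρ.1.conjStarAlgAut_star_eigenvectorUnitary
  have h' := congrArg φ h
  rw [map_add, map_mul, map_mul, map_zero, hφ] at h'
  have hY : φ X = 0 := by
    ext i j
    have hij := congrFun (congrFun h' i) j
    simp only [Matrix.add_apply, diagonal_mul, mul_diagonal, Function.comp_apply,
      Matrix.zero_apply] at hij
    have hpos : hρ.1.eigenvalues i + hρ.1.eigenvalues j ≠ 0 :=
      (add_pos (hρ.eigenvalues_pos i) (hρ.eigenvalues_pos j)).ne'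
    have hne : (hρ.1.eigenvalues i : ℂ) + (hρ.1.eigenvalues j : ℂ) ≠ 0 := by
      exact_mod_cast hpos
    refine (mul_eq_zero.mp ?_).resolve_left hne
    rw [add_mul, mul_comm (hρ.1.eigenvalues j : ℂ)]
    exact hij
  exact (map_eq_zero_iff φ φ.injective).mp hY

/-- Existence and uniqueness of the symmetric logarithmic derivative:
for positive definite `ρ` and Hermitian `A` there is a unique Hermitian `L` with
`A = (1/2)(ρL + Lρ)`. -/
theorem sld_exists_unique
    (d : ℕ)
    (ρ : Matrix (Fin d) (Fin d) ℂ) (hρ : ρ.PosDef)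
    (A : Matrix (Fin d) (Fin d) ℂ) (hA : A.IsHermitian) :
    ∃! L : Matrix (Fin d) (Fin d) ℂ,
      L.IsHermitian ∧ A = (1 / 2 : ℂ) • (ρ * L + L * ρ) := by
  let T : Matrix (Fin d) (Fin d) ℂ →ₗ[ℂ] Matrix (Fin d) (Fin d) ℂ :=
    (1 / 2 : ℂ) • (LinearMap.mulLeft ℂ ρ + LinearMap.mulRight ℂ ρ)
  have hT : ∀ X, T X = (1 / 2 : ℂ) • (ρ * X + X * ρ) := fun X => rfl
  have hinj : Function.Injective T := by
    refine (injective_iff_map_eq_zero T).mpr fun X hX => ?_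
    rw [hT] at hX
    exact eq_zero_of_posDef_anticommute hρ ((smul_eq_zero.mp hX).resolve_left (by norm_num))
  obtain ⟨L, hL⟩ := LinearMap.injective_iff_surjective.mp hinj A
  refine ⟨L, ⟨hinj ?_, hL.symm⟩, fun M hM => hinj ?_⟩
  · have hstar : T Lᴴ = (T L)ᴴ := by
      simp [hT, conjTranspose_smul, hρ.1.eq, add_comm]
    rw [hstar, hL, hA.eq]
  · rw [hL, hT]
    exact hM.2.symm
end

section
/- The inverse of the SLD quantum Fisher information matrix is the symmetrized covariance matrix of the generators: let J_S be the real symmetric (d²−1)×(d²−1) matrix with entries [J_S]_{ij} = (1/2)Tr(ρ(L_iL_j + L_jL_i)), where L_i is the Hermitian solution of λ_i = (1/2)(ρL_i + L_iρ), and let G be the real symmetric matrix with entries G_{ij} = (1/2)Tr(ρ(λ_iλ_j + λ_jλ_i)) − Tr(ρλ_i)Tr(ρλ_j). Then J_S · G = I and G · J_S = I; in particular J_S is invertible and [J_S^{-1}]_{ij} = C_s(λ_i, λ_j). -/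
open Matrix BigOperators ComplexOrder

/-!
Write `C_s(X, Y)` for the symmetrized covariance. The SLD `L_j` represents the coordinate functional
of `λ_j` with respect to `C_s`: since `Tr (ρ L_j) = Tr λ_j = 0`, cyclicity of the trace gives
`C_s(X, L_j) = Tr (X λ_j)`. Cyclicity also gives `[J_S]_{kj} = Tr (λ_k L_j)`, so the entries of
column `j` of `J_S` are the coordinates of the traceless part of `L_j` in the orthonormal basis:
`L_j = r • 1 + ∑ k, [J_S]_{kj} • λ_k`. As `C_s(X, 1) = 0`, linearity yields
`(G J_S)_{ij} = C_s(λ_i, ∑ k, [J_S]_{kj} • λ_k) = C_s(λ_i, L_j) = Tr (λ_i λ_j) = δ_{ij}`.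
The other product follows because a one-sided inverse of a square matrix is two-sided.
-/

/-- The symmetrized covariance of `X` and `Y` in the state `ρ`. Real parts make it real-valued for
all matrices; for Hermitian arguments the traces involved are already real. -/
noncomputable def symCov {n : Type*} [Fintype n] (ρ X Y : Matrix n n ℂ) : ℝ :=
  (1 / 2) * (ρ * (X * Y + Y * X)).trace.re - (ρ * X).trace.re * (ρ * Y).trace.re

section

variable {n ι : Type*} [Fintype n] [DecidableEq n] [Fintype ι] [DecidableEq ι]

lemma symCov_sum_right (ρ X : Matrix n n ℂ) (c : ι → ℝ) (Y : ι → Matrix n n ℂ) :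
    symCov ρ X (∑ k, (c k : ℂ) • Y k) = ∑ k, symCov ρ X (Y k) * c k := by
  simp only [symCov, Matrix.mul_sum, Matrix.sum_mul, Matrix.mul_add, Matrix.trace_add,
    Matrix.trace_sum, Matrix.mul_smul, Matrix.smul_mul, Matrix.trace_smul, smul_eq_mul,
    Complex.add_re, Complex.re_sum, Complex.re_ofReal_mul]
  rw [← Finset.sum_add_distrib, Finset.mul_sum, Finset.mul_sum, ← Finset.sum_sub_distrib]
  exact Finset.sum_congr rfl fun k _ => by ring

/-- Covariances do not see multiples of the identity. -/
lemma symCov_add_smul_one_right {ρ : Matrix n n ℂ} (hρ : ρ.trace = 1) (X Y : Matrix n n ℂ)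
    (r : ℝ) : symCov ρ X ((r : ℂ) • 1 + Y) = symCov ρ X Y := by
  simp only [symCov, Matrix.mul_add, Matrix.add_mul, Matrix.trace_add, Matrix.mul_smul,
    Matrix.smul_mul, Matrix.mul_one, Matrix.one_mul, Matrix.trace_smul, smul_eq_mul,
    Complex.add_re, Complex.re_ofReal_mul, hρ, Complex.one_re]
  ring

/-- Cyclicity of the trace moves the symmetrization from the pair `X, L` to the pair `ρ, L`. -/
lemma trace_mul_symm (ρ X L : Matrix n n ℂ) :
    (ρ * (X * L + L * X)).trace = (X * (ρ * L + L * ρ)).trace := by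
  have h₁ : (ρ * (X * L)).trace = (X * (L * ρ)).trace := by
    rw [Matrix.trace_mul_comm, Matrix.mul_assoc]
  have h₂ : (ρ * (L * X)).trace = (X * (ρ * L)).trace := by
    rw [← Matrix.mul_assoc, Matrix.trace_mul_comm]
  rw [Matrix.mul_add, Matrix.mul_add, Matrix.trace_add, Matrix.trace_add, h₁, h₂, add_comm]

/-- The symmetric logarithmic derivative `L` of a traceless `A` represents the functional
`X ↦ Tr (X A)` with respect to the symmetrized covariance. -/
lemma symCov_sld_right {ρ A L : Matrix n n ℂ} (hA : A.trace = 0)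
    (hL : A = (1 / 2 : ℂ) • (ρ * L + L * ρ)) (X : Matrix n n ℂ) :
    symCov ρ X L = (X * A).trace.re := by
  have h₀ : (ρ * L).trace = 0 := by
    rw [hL, Matrix.trace_smul, Matrix.trace_add, Matrix.trace_mul_comm L ρ, smul_eq_mul] at hA
    linear_combination hA
  have h₁ : (X * A).trace = ((1 / 2 : ℝ) : ℂ) * (ρ * (X * L + L * X)).trace := by
    rw [trace_mul_symm, hL, Matrix.mul_smul, Matrix.trace_smul, smul_eq_mul]
    norm_num
  rw [symCov, h₀, h₁, Complex.re_ofReal_mul]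
  simp

/-- Expansion of a Hermitian matrix in the identity and an orthonormal basis of the traceless
Hermitian matrices, with coordinates given by the trace inner product. -/
lemma hermitian_expansion [Nonempty n] {B : ι → Matrix n n ℂ}
    (htr : ∀ i, (B i).trace = 0)
    (hortho : ∀ i j, (B i * B j).trace = if i = j then 1 else 0)
    (hspan : ∀ X : Matrix n n ℂ, X.IsHermitian → X.trace = 0 →
      ∃ c : ι → ℝ, X = ∑ i, (c i : ℂ) • B i)
    {L : Matrix n n ℂ} (hL : L.IsHermitian) :
    ∃ r : ℝ, L = (r : ℂ) • 1 + ∑ k, (((B k * L).trace.re : ℝ) : ℂ) • B k := by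
  have hreal : ((L.trace.re : ℝ) : ℂ) = L.trace := by
    rw [← Complex.conj_eq_iff_re, starRingEnd_apply, ← Matrix.trace_conjTranspose, hL.eq]
  set r : ℝ := L.trace.re / Fintype.card n with hr
  have hcard : (Fintype.card n : ℂ) ≠ 0 := by exact_mod_cast Fintype.card_ne_zero
  obtain ⟨c, hc⟩ := hspan (L - (r : ℂ) • 1)
    (hL.sub (by simp [Matrix.IsHermitian, Matrix.conjTranspose_smul]))
    (by
      rw [Matrix.trace_sub, Matrix.trace_smul, Matrix.trace_one, smul_eq_mul, hr,
        Complex.ofReal_div, hreal, Complex.ofReal_natCast, div_mul_cancel₀ _ hcard, sub_self])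
  have hL' : L = (r : ℂ) • 1 + ∑ k, (c k : ℂ) • B k := by rw [← hc]; abel
  have hck : ∀ k, (B k * L).trace.re = c k := by
    intro k
    rw [hL', Matrix.mul_add, Matrix.trace_add, Matrix.mul_smul, Matrix.mul_one,
      Matrix.trace_smul, htr k, Matrix.mul_sum, Matrix.trace_sum]
    simp [hortho]
  exact ⟨r, by simpa only [hck] using hL'⟩

end

/-- The inverse of the SLD quantum Fisher information matrix is the symmetrized
covariance matrix of the generators: `J_S G = G J_S = I` where
`G_ij = C_s(λ_i, λ_j)`. -/
theorem sld_fisher_inverse_is_symmetrized_covariance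
    (d : ℕ) (hd : 2 ≤ d)
    (ρ : Matrix (Fin d) (Fin d) ℂ)
    (hρ : ρ.PosDef) (hρtr : ρ.trace = 1)
    (Λ : Fin (d ^ 2 - 1) → Matrix (Fin d) (Fin d) ℂ)
    (hΛherm : ∀ i, (Λ i).IsHermitian)
    (hΛtrace : ∀ i, (Λ i).trace = 0)
    (hΛortho : ∀ i j, (Λ i * Λ j).trace = if i = j then 1 else 0)
    (hΛspan : ∀ X : Matrix (Fin d) (Fin d) ℂ, X.IsHermitian → X.trace = 0 →
      ∃ c : Fin (d ^ 2 - 1) → ℝ, X = ∑ i, (c i : ℂ) • Λ i)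
    (Lop : Fin (d ^ 2 - 1) → Matrix (Fin d) (Fin d) ℂ)
    (hLherm : ∀ i, (Lop i).IsHermitian)
    (hLeq : ∀ i, Λ i = (1 / 2 : ℂ) • (ρ * Lop i + Lop i * ρ))
    (JS : Matrix (Fin (d ^ 2 - 1)) (Fin (d ^ 2 - 1)) ℝ)
    (hJS : ∀ i j, JS i j = (1 / 2) * (ρ * (Lop i * Lop j + Lop j * Lop i)).trace.re)
    (G : Matrix (Fin (d ^ 2 - 1)) (Fin (d ^ 2 - 1)) ℝ)
    (hG : ∀ i j, G i j = (1 / 2) * (ρ * (Λ i * Λ j + Λ j * Λ i)).trace.re -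
      (ρ * Λ i).trace.re * (ρ * Λ j).trace.re) :
    JS * G = 1 ∧ G * JS = 1 := by
  have : Nonempty (Fin d) := ⟨⟨0, by omega⟩⟩
  have hGcov : ∀ i j, G i j = symCov ρ (Λ i) (Λ j) := hG
  have hJStr : ∀ k j, JS k j = (Λ k * Lop j).trace.re := by
    intro k j
    have h : (Λ k * Lop j).trace
        = ((1 / 2 : ℝ) : ℂ) * (ρ * (Lop k * Lop j + Lop j * Lop k)).trace := by
      rw [add_comm (Lop k * Lop j), trace_mul_symm, Matrix.trace_mul_comm, hLeq k,
        Matrix.mul_smul, Matrix.trace_smul, smul_eq_mul]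
      norm_num
    rw [h, Complex.re_ofReal_mul, hJS]
  have hGJ : G * JS = 1 := by
    ext i j
    obtain ⟨r, hr⟩ := hermitian_expansion hΛtrace hΛortho hΛspan (hLherm j)
    calc (G * JS) i j = ∑ k, symCov ρ (Λ i) (Λ k) * (Λ k * Lop j).trace.re := by
          simp only [Matrix.mul_apply, hGcov, hJStr]
      _ = symCov ρ (Λ i) (Lop j) := by
          rw [← symCov_sum_right, ← symCov_add_smul_one_right hρtr _ _ r, ← hr]
      _ = (Λ i * Λ j).trace.re := symCov_sld_right (hΛtrace j) (hLeq j) _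
      _ = (1 : Matrix _ _ ℝ) i j := by
          rw [hΛortho, Matrix.one_apply]
          split_ifs <;> simp
  exact ⟨mul_eq_one_comm.mp hGJ, hGJ⟩
end

section
/- The inverse of the RLD quantum Fisher information matrix is the (non-symmetrized) covariance matrix of the generators: let J_R be the Hermitian (d²−1)×(d²−1) complex matrix with entries [J_R]_{ij} = Tr(λ_j ρ^{-1} λ_i), and let H be the complex matrix with entries H_{ij} = Tr(ρλ_iλ_j) − Tr(ρλ_i)Tr(ρλ_j). Then J_R · H = I and H · J_R = I; in particular J_R is invertible and [J_R^{-1}]_{ij} = C(λ_i, λ_j). -/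
/-!
Any complex traceless matrix `B` expands as `B = ∑ⱼ Tr(Λⱼ B) Λⱼ`: split `B` into Hermitian and
skew-Hermitian parts and use orthonormality (`traceless_expansion`). Hence
`∑ⱼ Tr(Λⱼ A) Tr(Λⱼ B) = Tr(B A)` for every `A`. Taking `A = ρ⁻¹ Λᵢ` and the traceless matrix
`B = Λₖ ρ - Tr(ρ Λₖ) ρ`, the left side is `(J_R H)ᵢₖ`, and the right side is
`Tr(Λₖ Λᵢ) - Tr(ρ Λₖ) Tr(Λᵢ) = δᵢₖ`. The other product follows since the matrices are square.
-/

open Matrix BigOperators ComplexOrder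

/-- Complex completeness relation obtained from spanning over the real numbers. -/
theorem traceless_expansion {d n : ℕ}
    (Λ : Fin n → Matrix (Fin d) (Fin d) ℂ)
    (hΛortho : ∀ i j, (Λ i * Λ j).trace = if i = j then 1 else 0)
    (hΛspan : ∀ X : Matrix (Fin d) (Fin d) ℂ, X.IsHermitian → X.trace = 0 →
      ∃ c : Fin n → ℝ, X = ∑ i, (c i : ℂ) • Λ i)
    (B : Matrix (Fin d) (Fin d) ℂ) (hB : B.trace = 0) :
    B = ∑ j, (Λ j * B).trace • Λ j := by
  have hB' : Bᴴ.trace = 0 := by rw [trace_conjTranspose, hB, star_zero]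
  obtain ⟨a, ha⟩ := hΛspan (B + Bᴴ)
    (by rw [IsHermitian, conjTranspose_add, conjTranspose_conjTranspose, add_comm])
    (by rw [trace_add, hB, hB', add_zero])
  obtain ⟨b, hb⟩ := hΛspan (Complex.I • (B - Bᴴ))
    (by
      rw [IsHermitian, conjTranspose_smul, conjTranspose_sub, conjTranspose_conjTranspose,
        Complex.star_def, Complex.conj_I, neg_smul, ← smul_neg, neg_sub])
    (by rw [trace_smul, trace_sub, hB, hB', sub_zero, smul_zero])
  obtain ⟨c, hc⟩ : ∃ c : Fin n → ℂ, B = ∑ j, c j • Λ j := by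
    refine ⟨fun j => (1 / 2 : ℂ) * a j - (Complex.I / 2) * b j, ?_⟩
    have h : B = (1 / 2 : ℂ) • (B + Bᴴ) - (Complex.I / 2) • (Complex.I • (B - Bᴴ)) := by
      have hI : Complex.I / 2 * Complex.I = -(1 / 2) := by
        linear_combination (1 / 2 : ℂ) * Complex.I_mul_I
      rw [smul_smul, hI]
      module
    rw [ha, hb] at h
    rw [h]
    simp only [Finset.smul_sum, smul_smul, sub_smul, Finset.sum_sub_distrib]
  have hcoef : ∀ j, (Λ j * B).trace = c j := by
    intro j
    rw [hc]
    simp [Finset.mul_sum, trace_sum, hΛortho]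
  simp only [hcoef]
  exact hc

/-- The inverse of the RLD quantum Fisher information matrix is the
(non-symmetrized) covariance matrix of the generators: `J_R H = H J_R = I` where
`H_ij = C(λ_i, λ_j)`. -/
theorem rld_fisher_inverse_is_covariance
    (d : ℕ) (hd : 2 ≤ d)
    (ρ : Matrix (Fin d) (Fin d) ℂ)
    (hρ : ρ.PosDef) (hρtr : ρ.trace = 1)
    (Λ : Fin (d ^ 2 - 1) → Matrix (Fin d) (Fin d) ℂ)
    (hΛherm : ∀ i, (Λ i).IsHermitian)
    (hΛtrace : ∀ i, (Λ i).trace = 0)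
    (hΛortho : ∀ i j, (Λ i * Λ j).trace = if i = j then 1 else 0)
    (hΛspan : ∀ X : Matrix (Fin d) (Fin d) ℂ, X.IsHermitian → X.trace = 0 →
      ∃ c : Fin (d ^ 2 - 1) → ℝ, X = ∑ i, (c i : ℂ) • Λ i)
    (JR : Matrix (Fin (d ^ 2 - 1)) (Fin (d ^ 2 - 1)) ℂ)
    (hJR : ∀ i j, JR i j = (Λ j * ρ⁻¹ * Λ i).trace)
    (H : Matrix (Fin (d ^ 2 - 1)) (Fin (d ^ 2 - 1)) ℂ)
    (hH : ∀ i j, H i j = (ρ * Λ i * Λ j).trace - (ρ * Λ i).trace * (ρ * Λ j).trace) :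
    JR * H = 1 ∧ H * JR = 1 := by
  have hu : IsUnit ρ.det := (Matrix.isUnit_iff_isUnit_det ρ).1 hρ.isUnit
  have key : JR * H = 1 := by
    ext i k
    set B : Matrix (Fin d) (Fin d) ℂ := Λ k * ρ - (ρ * Λ k).trace • ρ with hBdef
    have hB : B.trace = 0 := by
      rw [hBdef, trace_sub, trace_smul, hρtr, trace_mul_comm (Λ k), smul_eq_mul, mul_one, sub_self]
    have hexp := traceless_expansion Λ hΛortho hΛspan B hB
    have hHB : ∀ j, H j k = (Λ j * B).trace := by
      intro j
      rw [hH, hBdef, mul_sub, trace_sub, Matrix.mul_smul, trace_smul, smul_eq_mul, mul_assoc,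
        trace_mul_comm ρ (Λ j * Λ k), mul_assoc, trace_mul_comm ρ (Λ j), mul_comm (trace _)]
    calc (JR * H) i k = ∑ j, (Λ j * ρ⁻¹ * Λ i).trace * (Λ j * B).trace := by
          simp only [Matrix.mul_apply, hJR, hHB]
      _ = ((∑ j, (Λ j * B).trace • Λ j) * (ρ⁻¹ * Λ i)).trace := by
          rw [Finset.sum_mul, trace_sum]
          refine Finset.sum_congr rfl fun j _ => ?_
          rw [Matrix.smul_mul, trace_smul, smul_eq_mul, mul_comm, mul_assoc]
      _ = (B * (ρ⁻¹ * Λ i)).trace := by rw [← hexp]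
      _ = (Λ k * Λ i).trace - (ρ * Λ k).trace * (Λ i).trace := by
          rw [hBdef, sub_mul, Matrix.smul_mul, trace_sub, trace_smul, smul_eq_mul, mul_assoc,
            Matrix.mul_nonsing_inv_cancel_left _ _ hu]
      _ = (1 : Matrix _ _ ℂ) i k := by
          rw [hΛtrace, mul_zero, sub_zero, hΛortho, Matrix.one_apply]
          simp only [eq_comm]
  exact ⟨key, mul_eq_one_comm.1 key⟩
end

section
/- Monotonicity of the Fisher information matrix under classical post-processing: let K and L be finite index sets, let p : K → ℝ with p_k > 0 for all k, let v : K → ℝ^m, and let F be a stochastic matrix indexed by L × K (F_{lk} ≥ 0 and Σ_{l∈L} F_{lk} = 1 for every k). Define p'_l = Σ_k F_{lk} p_k and v'_l = Σ_k F_{lk} v_k, and assume p'_l > 0 for all l. Then the m×m real symmetric matrix Σ_{k∈K} (1/p_k) v_k v_kᵀ − Σ_{l∈L} (1/p'_l) v'_l (v'_l)ᵀ is positive semidefinite. -/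
open Matrix BigOperators ComplexOrder

/-!
For a test vector `x`, put `c k = v k ⬝ᵥ x`; then `v' l ⬝ᵥ x = ∑ k, F l k * c k`, and the quadratic
form of the difference matrix at `x` is `∑ k, c k ^ 2 / p k - ∑ l, (∑ k, F l k * c k) ^ 2 / p' l`.
By Cauchy–Schwarz, applied for each `l` with the weights `F l k`, the `l`-th subtracted term is at
most `∑ k, F l k * (c k ^ 2 / p k)` (`sq_sum_div_sum_le`). Summing over `l` and using that the
columns of `F` sum to one gives the claim.
-/

/-- The Cauchy–Schwarz (Sedrakyan) inequality with weights `w` that are allowed to vanish. -/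
lemma sq_sum_div_sum_le {K : Type*} [Fintype K] (w p c : K → ℝ) (hw : ∀ k, 0 ≤ w k)
    (hp : ∀ k, 0 < p k) (hpos : 0 < ∑ k, w k * p k) :
    (∑ k, w k * c k) ^ 2 / ∑ k, w k * p k ≤ ∑ k, w k * (c k ^ 2 / p k) := by
  rw [div_le_iff₀ hpos]
  refine Finset.sum_sq_le_sum_mul_sum_of_sq_le_mul _
    (fun k _ => mul_nonneg (hw k) (div_nonneg (sq_nonneg _) (hp k).le))
    (fun k _ => mul_nonneg (hw k) (hp k).le) (fun k _ => le_of_eq ?_)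
  have := (hp k).ne'
  field_simp

/-- The quadratic form of `∑ k, (1 / q k) u k (u k)ᵀ`, computed entrywise. -/
lemma quadForm_sum_div {ι : Type*} [Fintype ι] {m : ℕ} (q : ι → ℝ) (u : ι → Fin m → ℝ)
    (x : Fin m → ℝ) :
    ∑ i, ∑ j, x i * (∑ k, u k i * u k j / q k) * x j = ∑ k, (u k ⬝ᵥ x) ^ 2 / q k := by
  simp only [Finset.mul_sum, Finset.sum_mul]
  rw [Finset.sum_congr rfl fun i _ => Finset.sum_comm, Finset.sum_comm]
  refine Finset.sum_congr rfl fun k _ => ?_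
  rw [sq, dotProduct, Finset.sum_mul_sum, Finset.sum_div]
  refine Finset.sum_congr rfl fun i _ => ?_
  rw [Finset.sum_div]
  exact Finset.sum_congr rfl fun j _ => by ring

/-- Monotonicity of the classical Fisher information matrix under post-processing
by a stochastic matrix `F`. -/
theorem fisher_information_monotone_post_processing
    (K L : Type) [Fintype K] [Fintype L] (m : ℕ)
    (p : K → ℝ) (hp : ∀ k, 0 < p k)
    (v : K → Fin m → ℝ)
    (F : L → K → ℝ)
    (hFpos : ∀ l k, 0 ≤ F l k)
    (hFsum : ∀ k, ∑ l, F l k = 1)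
    (p' : L → ℝ) (hp'def : ∀ l, p' l = ∑ k, F l k * p k)
    (v' : L → Fin m → ℝ) (hv'def : ∀ l, v' l = ∑ k, F l k • v k)
    (hp' : ∀ l, 0 < p' l)
    (A : Matrix (Fin m) (Fin m) ℝ)
    (hA : ∀ i j, A i j = ∑ k, v k i * v k j / p k - ∑ l, v' l i * v' l j / p' l) :
    A.PosSemidef := by
  refine PosSemidef.of_dotProduct_mulVec_nonneg ?_ fun x => ?_
  · ext i j
    simp [hA, mul_comm]
  · have hquad : star x ⬝ᵥ (A *ᵥ x) =
        ∑ k, (v k ⬝ᵥ x) ^ 2 / p k - ∑ l, (v' l ⬝ᵥ x) ^ 2 / p' l := by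
      rw [← quadForm_sum_div, ← quadForm_sum_div, ← Finset.sum_sub_distrib]
      simp only [← Finset.sum_sub_distrib, ← sub_mul, ← mul_sub]
      simp only [← hA]
      simp [dotProduct, mulVec, Finset.mul_sum, mul_assoc]
    rw [hquad, sub_nonneg]
    calc ∑ l, (v' l ⬝ᵥ x) ^ 2 / p' l
        ≤ ∑ l, ∑ k, F l k * ((v k ⬝ᵥ x) ^ 2 / p k) := by
          refine Finset.sum_le_sum fun l _ => ?_
          have hv : v' l ⬝ᵥ x = ∑ k, F l k * (v k ⬝ᵥ x) := by
            simp [hv'def, sum_dotProduct]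
          rw [hv, hp'def]
          exact sq_sum_div_sum_le _ _ _ (hFpos l) hp (hp'def l ▸ hp' l)
      _ = ∑ k, (v k ⬝ᵥ x) ^ 2 / p k := by
          rw [Finset.sum_comm]
          simp only [← Finset.sum_mul, hFsum, one_mul]
end

section
/- Nonnegativity of the measurement error: let M = {M_k} be any POVM on ℂ^d, let X be a Hermitian d×d matrix with coordinate vector x ∈ ℝ^{d²−1}, and suppose u ∈ ℝ^{d²−1} satisfies J(M)u = x. Then x·u ≥ Var_ρ(X); that is, the error ε(X;M) = x·u − Var_ρ(X) of any measurement is nonnegative, with the variance of the optimal estimator per sample bounded below by the quantum fluctuation (ΔX)². -/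
/-!
Put `Y = ∑ᵢ uᵢ Λᵢ`, `pₖ = Tr(ρ Mₖ)`, `fₖ = Tr(Y Mₖ) / pₖ` and `Z = ∑ₖ fₖ Mₖ`. The equation
`J u = x` says that `Z` and `X` have the same trace against every `Λᵢ`, so `Z = X + t` for a real
scalar `t` (`eq_smul_one_of_trace_basis_eq_zero`), and it gives `x·u = ∑ₖ fₖ² pₖ`. The operator
inequality `∑ₖ fₖ² Mₖ - Z² = ∑ₖ (fₖ - Z) Mₖ (fₖ - Z) ≥ 0` (`sum_sq_smul_sub_sq`) yields
`x·u ≥ Tr(ρ Z²)`, and `Tr(ρ (X + t)²) = Var_ρ(X) + (Tr(ρ X) + t)² ≥ Var_ρ(X)`.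
The value of `t` plays no role, and with the convention `a / 0 = 0` the identity
`a² / p = (a / p)² p` behind the formula for `x·u` holds for `p = 0` too.
-/

open Matrix BigOperators ComplexOrder

open scoped MatrixOrder Matrix.Norms.L2Operator in
lemma trace_mul_re_nonneg_s11 {d : ℕ} {A B : Matrix (Fin d) (Fin d) ℂ}
    (hA : A.PosSemidef) (hB : B.PosSemidef) : 0 ≤ (A * B).trace.re := by
  obtain ⟨C, rfl⟩ := CStarAlgebra.nonneg_iff_eq_star_mul_self.mp hA.nonneg
  rw [Matrix.star_eq_conjTranspose]
  have h : (Cᴴ * C * B).trace = (C * B * Cᴴ).trace := by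
    rw [Matrix.mul_assoc, Matrix.trace_mul_comm]
  rw [h]
  exact (Complex.le_def.mp (hB.mul_mul_conjTranspose_same C).trace_nonneg).1

lemma sum_sq_smul_sub_sq {d : ℕ} {ι : Type} [Fintype ι]
    (M : ι → Matrix (Fin d) (Fin d) ℂ) (hM : ∑ k, M k = 1) (f : ι → ℂ)
    (Z : Matrix (Fin d) (Fin d) ℂ) (hZ : Z = ∑ k, f k • M k) :
    ∑ k, (f k • 1 - Z) * M k * (f k • 1 - Z) = ∑ k, (f k ^ 2) • M k - Z * Z := by
  have h : ∀ k, (f k • 1 - Z) * M k * (f k • 1 - Z) =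
      (f k ^ 2) • M k - (f k • M k) * Z - Z * (f k • M k) + Z * M k * Z := by
    intro k
    simp only [sub_mul, mul_sub, smul_mul_assoc, mul_smul_comm, one_mul, mul_one, smul_smul,
      ← pow_two, smul_sub]
    abel
  simp only [h, Finset.sum_add_distrib, Finset.sum_sub_distrib, ← Finset.sum_mul,
    ← Finset.mul_sum, ← hZ, hM]
  noncomm_ring

/-- A Hermitian matrix orthogonal to every traceless Hermitian matrix is a real multiple of the
identity, namely `Tr W / d` times it. -/
lemma eq_smul_one_of_trace_basis_eq_zero {d : ℕ} (hd : 2 ≤ d) {n : ℕ}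
    (Λ : Fin n → Matrix (Fin d) (Fin d) ℂ)
    (hΛtrace : ∀ i, (Λ i).trace = 0)
    (hΛortho : ∀ i j, (Λ i * Λ j).trace = if i = j then 1 else 0)
    (hΛspan : ∀ X : Matrix (Fin d) (Fin d) ℂ, X.IsHermitian → X.trace = 0 →
      ∃ c : Fin n → ℝ, X = ∑ i, (c i : ℂ) • Λ i)
    (W : Matrix (Fin d) (Fin d) ℂ) (hW : W.IsHermitian)
    (h0 : ∀ i, (Λ i * W).trace.re = 0) : ∃ t : ℝ, W = (t : ℂ) • 1 := by
  have hd0 : (d : ℂ) ≠ 0 := by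
    have : d ≠ 0 := by omega
    exact_mod_cast this
  have htr : ((W.trace.re : ℝ) : ℂ) = W.trace := by
    apply Complex.conj_eq_iff_re.mp
    have h := Matrix.trace_conjTranspose W
    rw [hW.eq] at h
    exact h.symm
  refine ⟨W.trace.re / d, ?_⟩
  set t : ℝ := W.trace.re / d with ht
  have htd : (t : ℂ) * d = W.trace := by
    rw [ht]
    push_cast
    rw [htr]
    field_simp
  have hherm : (W - (t : ℂ) • (1 : Matrix (Fin d) (Fin d) ℂ)).IsHermitian := by
    refine hW.sub ?_
    simp [Matrix.IsHermitian, Matrix.conjTranspose_smul]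
  have htr0 : (W - (t : ℂ) • (1 : Matrix (Fin d) (Fin d) ℂ)).trace = 0 := by
    simp [Matrix.trace_sub, Matrix.trace_smul, htd]
  obtain ⟨c, hc⟩ := hΛspan _ hherm htr0
  have hc0 : ∀ j, c j = 0 := by
    intro j
    have h1 : (Λ j * (W - (t : ℂ) • (1 : Matrix (Fin d) (Fin d) ℂ))).trace = (c j : ℂ) := by
      rw [hc, Finset.mul_sum, Matrix.trace_sum]
      simp [Matrix.trace_smul, hΛortho]
    have h2 : (Λ j * (W - (t : ℂ) • (1 : Matrix (Fin d) (Fin d) ℂ))).trace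
        = (Λ j * W).trace := by
      simp [mul_sub, Matrix.trace_sub, Matrix.trace_smul, hΛtrace]
    have h3 := congrArg Complex.re (h1.symm.trans h2)
    rw [h0 j] at h3
    simpa using h3
  simp only [hc0, Complex.ofReal_zero, zero_smul, Finset.sum_const_zero] at hc
  exact sub_eq_zero.mp hc

/-- Nonnegativity of the measurement error: for any POVM `M` and observable `X`,
`ε(X;M) = x·u − Var_ρ(X) ≥ 0`. -/
theorem measurement_error_nonneg
    (d : ℕ) (hd : 2 ≤ d)
    (ρ : Matrix (Fin d) (Fin d) ℂ)
    (hρ : ρ.PosDef) (hρtr : ρ.trace = 1)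
    (Λ : Fin (d ^ 2 - 1) → Matrix (Fin d) (Fin d) ℂ)
    (hΛherm : ∀ i, (Λ i).IsHermitian)
    (hΛtrace : ∀ i, (Λ i).trace = 0)
    (hΛortho : ∀ i j, (Λ i * Λ j).trace = if i = j then 1 else 0)
    (hΛspan : ∀ X : Matrix (Fin d) (Fin d) ℂ, X.IsHermitian → X.trace = 0 →
      ∃ c : Fin (d ^ 2 - 1) → ℝ, X = ∑ i, (c i : ℂ) • Λ i)
    (ι : Type) [Fintype ι]
    (M : ι → Matrix (Fin d) (Fin d) ℂ)
    (hMpsd : ∀ k, (M k).PosSemidef)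
    (hMsum : ∑ k, M k = 1)
    (hMne : ∀ k, M k ≠ 0)
    (J : Matrix (Fin (d ^ 2 - 1)) (Fin (d ^ 2 - 1)) ℝ)
    (hJ : ∀ i j, J i j =
      ∑ k, ((Λ i * M k).trace.re * (Λ j * M k).trace.re) / (ρ * M k).trace.re)
    (X : Matrix (Fin d) (Fin d) ℂ) (hX : X.IsHermitian)
    (x : Fin (d ^ 2 - 1) → ℝ)
    (hx : ∀ i, x i = ((Λ i * X).trace).re)
    (u : Fin (d ^ 2 - 1) → ℝ)
    (hu : J *ᵥ u = x) :
    x ⬝ᵥ u ≥ ((ρ * X ^ 2).trace.re - ((ρ * X).trace.re) ^ 2) := by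
  set p : ι → ℝ := fun k => (ρ * M k).trace.re with hp
  set a : ι → ℝ := fun k => ∑ i, u i * (Λ i * M k).trace.re with ha
  set f : ι → ℝ := fun k => a k / p k with hf
  set Z : Matrix (Fin d) (Fin d) ℂ := ∑ k, (f k : ℂ) • M k with hZ
  have hxf : ∀ i, x i = ∑ k, f k * (Λ i * M k).trace.re := by
    intro i
    rw [← hu]
    simp only [Matrix.mulVec, dotProduct, hJ, Finset.sum_mul]
    rw [Finset.sum_comm]
    refine Finset.sum_congr rfl fun k _ => ?_
    simp only [hf, ha, Finset.sum_div, Finset.sum_mul]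
    refine Finset.sum_congr rfl fun j _ => ?_
    simp only [hp]
    ring
  have hxu : x ⬝ᵥ u = ∑ k, f k ^ 2 * p k := by
    simp only [dotProduct, hxf, Finset.sum_mul]
    rw [Finset.sum_comm]
    refine Finset.sum_congr rfl fun k _ => ?_
    have h1 : ∑ i, f k * (Λ i * M k).trace.re * u i = f k * a k := by
      simp only [ha, Finset.mul_sum]
      exact Finset.sum_congr rfl fun j _ => by ring
    rw [h1]
    simp only [hf]
    by_cases h : p k = 0
    · simp [h]
    · field_simp
  have hZherm : Z.IsHermitian := by
    simp only [Matrix.IsHermitian, hZ, Matrix.conjTranspose_sum, Matrix.conjTranspose_smul]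
    refine Finset.sum_congr rfl fun k _ => ?_
    rw [(hMpsd k).1.eq]
    simp
  have horth : ∀ i, (Λ i * (Z - X)).trace.re = 0 := by
    intro i
    rw [mul_sub, Matrix.trace_sub, Complex.sub_re, ← hx, hxf, hZ, Finset.mul_sum,
      Matrix.trace_sum, Complex.re_sum]
    simp [Matrix.trace_smul]
  obtain ⟨t, ht⟩ := eq_smul_one_of_trace_basis_eq_zero hd Λ hΛtrace hΛortho hΛspan
    (Z - X) (hZherm.sub hX) horth
  have hZX : Z = X + (t : ℂ) • 1 := by rw [← ht]; abel
  have hpos : 0 ≤ (ρ * (∑ k, ((f k : ℂ) ^ 2) • M k - Z * Z)).trace.re := by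
    rw [← sum_sq_smul_sub_sq M hMsum (fun k => (f k : ℂ)) Z hZ]
    refine trace_mul_re_nonneg_s11 hρ.posSemidef (Matrix.posSemidef_sum _ fun k _ => ?_)
    have hh : ((f k : ℂ) • (1 : Matrix (Fin d) (Fin d) ℂ) - Z)ᴴ = (f k : ℂ) • 1 - Z := by
      rw [Matrix.conjTranspose_sub, hZherm.eq]
      simp [Matrix.conjTranspose_smul]
    have h := (hMpsd k).mul_mul_conjTranspose_same ((f k : ℂ) • 1 - Z)
    rwa [hh] at h
  have hS : (ρ * ∑ k, ((f k : ℂ) ^ 2) • M k).trace.re = x ⬝ᵥ u := by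
    rw [hxu, Finset.mul_sum, Matrix.trace_sum, Complex.re_sum]
    refine Finset.sum_congr rfl fun k _ => ?_
    rw [mul_smul_comm, Matrix.trace_smul, smul_eq_mul, ← Complex.ofReal_pow,
      Complex.re_ofReal_mul]
  have hZZ : (ρ * (Z * Z)).trace.re
      = (ρ * X ^ 2).trace.re + 2 * t * (ρ * X).trace.re + t ^ 2 := by
    have h1 : ρ * (Z * Z) = ρ * X ^ 2 + ((2 * t : ℝ) : ℂ) • (ρ * X) + ((t ^ 2 : ℝ) : ℂ) • ρ := by
      rw [hZX]
      simp only [add_mul, mul_add, smul_mul_assoc, mul_smul_comm, one_mul, mul_one, pow_two]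
      push_cast
      module
    rw [h1, Matrix.trace_add, Matrix.trace_add, Matrix.trace_smul, Matrix.trace_smul, hρtr,
      smul_eq_mul, smul_eq_mul, Complex.add_re, Complex.add_re, Complex.re_ofReal_mul,
      Complex.re_ofReal_mul]
    simp
  rw [mul_sub, Matrix.trace_sub, Complex.sub_re, hS, hZZ] at hpos
  nlinarith [sq_nonneg ((ρ * X).trace.re + t)]
end

section
/- Fisher information of a random projective measurement (off-diagonal entry): let Y₁, Y₂ be Hermitian d×d matrices such that every d×d complex matrix commuting with both Y₁ and Y₂ is a scalar multiple of the identity. For ν = 1, 2 let Y_ν = Σ_i β_{ν,i} P_{ν,i} be the spectral decomposition of Y_ν, let q₁, q₂ > 0 with q₁ + q₂ = 1, and let M be the POVM with elements {q_ν P_{ν,i}}. Let y₁, y₂ ∈ ℝ^{d²−1} be the coordinate vectors of Y₁, Y₂. Then any u ∈ ℝ^{d²−1} with J(M)u = y₂ satisfies y₁ · u = 0. Equivalently, y₁·J(M)^{-1}y₂ = C_s(Y₁,Y₂) − C_Q(Y₁,Y₂), which vanishes in the irreducible case. -/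
open Matrix BigOperators ComplexOrder

/-! Write `U = ∑ uⱼ Λⱼ`. The equation `J u = y₂` says that
`W = ∑ₖ (Tr(U Mₖ) / Tr(ρ Mₖ)) Mₖ - Y₂` is trace-orthogonal to every traceless Hermitian matrix, so
`W` is a scalar (`eq_smul_one_of_orthogonal`). Here `W = q₁ A + q₂ B - Y₂`, where `A` is a
combination of the spectral projections of `Y₁`, hence commutes with `Y₁`, and `B` likewise commutes
with `Y₂`. Solving for `A` shows that `A` commutes with `Y₂` as well, so irreducibility gives
`A = a • 1`, that is `Tr(U P₁ᵢ) = a Tr(ρ P₁ᵢ)` for all `i`. Summing over `i` yields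
`0 = Tr U = a Tr ρ = a`, so `Tr(U P₁ᵢ) = 0` for all `i`, and `y₁ · u = Tr(U Y₁) = 0`. -/

lemma trace_mul_im_eq_zero {n : Type*} [Fintype n] {A B : Matrix n n ℂ}
    (hA : A.IsHermitian) (hB : B.IsHermitian) : (A * B).trace.im = 0 := by
  have h : star (A * B).trace = (A * B).trace := by
    rw [← trace_conjTranspose, conjTranspose_mul, hA.eq, hB.eq, trace_mul_comm]
  exact Complex.conj_eq_iff_im.mp h

lemma isHermitian_real_smul {n : Type*} {A : Matrix n n ℂ} (hA : A.IsHermitian) (r : ℝ) :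
    ((r : ℂ) • A).IsHermitian := by
  simp [Matrix.IsHermitian, conjTranspose_smul, hA.eq]

lemma isHermitian_real_comb {n ι : Type*} [Fintype ι] {P : ι → Matrix n n ℂ}
    (hP : ∀ i, (P i).IsHermitian) (r : ι → ℝ) : (∑ i, (r i : ℂ) • P i).IsHermitian := by
  rw [Matrix.IsHermitian, conjTranspose_sum]
  exact Finset.sum_congr rfl fun i _ => (isHermitian_real_smul (hP i) (r i)).eq

lemma re_trace_comb_mul {n ι : Type*} [Fintype n] [Fintype ι] (P : ι → Matrix n n ℂ)
    (r : ι → ℝ) (A : Matrix n n ℂ) :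
    ((∑ i, (r i : ℂ) • P i) * A).trace.re = ∑ i, r i * (P i * A).trace.re := by
  simp [Finset.sum_mul, trace_sum]

lemma re_trace_mul_comb {n ι : Type*} [Fintype n] [Fintype ι] (P : ι → Matrix n n ℂ)
    (r : ι → ℝ) (A : Matrix n n ℂ) :
    (A * (∑ i, (r i : ℂ) • P i)).trace.re = ∑ i, r i * (A * P i).trace.re := by
  simp [Finset.mul_sum, trace_sum]

lemma comb_mul_comb {n ι : Type*} [Fintype n] [Fintype ι] [DecidableEq ι]
    {P : ι → Matrix n n ℂ} (hP : ∀ i j, P i * P j = if i = j then P i else 0) (a b : ι → ℝ) :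
    (∑ i, (a i : ℂ) • P i) * (∑ i, (b i : ℂ) • P i) = ∑ i, ((a i * b i : ℝ) : ℂ) • P i := by
  simp [Finset.sum_mul, Finset.mul_sum, hP, smul_smul, mul_comm, ← Complex.ofReal_mul,
    -Complex.ofReal_mul]

lemma comb_commute {n ι : Type*} [Fintype n] [Fintype ι] [DecidableEq ι]
    {P : ι → Matrix n n ℂ} (hP : ∀ i j, P i * P j = if i = j then P i else 0) (a b : ι → ℝ) :
    Commute (∑ i, (a i : ℂ) • P i) (∑ i, (b i : ℂ) • P i) := by
  rw [Commute, SemiconjBy, comb_mul_comb hP, comb_mul_comb hP]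
  simp [mul_comm]

/-- A nonzero projection has positive, hence nonzero, probability in a faithful state. -/
lemma re_trace_mul_proj_ne_zero {n : Type*} [Fintype n] [DecidableEq n] {ρ P : Matrix n n ℂ}
    (hρ : ρ.PosDef) (hP : P.IsHermitian) (hPP : P * P = P) (hne : P ≠ 0) :
    (ρ * P).trace.re ≠ 0 := by
  intro h
  have h0 : (ρ * P).trace = 0 := Complex.ext h (trace_mul_im_eq_zero hρ.isHermitian hP)
  have h1 : (Pᴴ * ρ * P).trace = 0 := by
    rw [hP.eq, mul_assoc, trace_mul_comm, mul_assoc, hPP, h0]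
  have h2 : Pᴴ * ρ * P = 0 :=
    (hρ.posSemidef.conjTranspose_mul_mul_same P).trace_eq_zero_iff.mp h1
  apply hne
  apply Matrix.ext_of_mulVec_single
  intro j
  rw [zero_mulVec]
  by_contra hx
  have h3 := hρ.dotProduct_mulVec_pos hx
  have h4 : star (P *ᵥ Pi.single j 1) ⬝ᵥ (ρ *ᵥ (P *ᵥ Pi.single j 1)) = 0 := by
    rw [star_mulVec, ← dotProduct_mulVec, mulVec_mulVec, mulVec_mulVec, h2]
    simp
  exact h3.ne' h4

/-- The trace-orthogonal complement of the traceless Hermitian matrices, within the Hermitian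
matrices, consists of scalars: the traceless part of `W` is orthogonal to itself. -/
lemma eq_smul_one_of_orthogonal {n ι : Type*} [Fintype n] [DecidableEq n] [Nonempty n] [Fintype ι]
    {Λ : ι → Matrix n n ℂ} (hΛtrace : ∀ i, (Λ i).trace = 0)
    (hΛspan : ∀ X : Matrix n n ℂ, X.IsHermitian → X.trace = 0 →
      ∃ c : ι → ℝ, X = ∑ i, (c i : ℂ) • Λ i)
    {W : Matrix n n ℂ} (hW : W.IsHermitian) (h : ∀ i, (Λ i * W).trace.re = 0) :
    ∃ c : ℂ, W = c • (1 : Matrix n n ℂ) := by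
  have him : W.trace.im = 0 := by
    simpa using trace_mul_im_eq_zero hW (isHermitian_one (n := n) (α := ℂ))
  have hre : ((W.trace.re : ℝ) : ℂ) = W.trace := Complex.ext (by simp) (by simp [him])
  set r : ℝ := W.trace.re / Fintype.card n with hr
  have hcard : (Fintype.card n : ℂ) ≠ 0 := by simp
  have hX : (W - (r : ℂ) • 1).IsHermitian := hW.sub (isHermitian_real_smul isHermitian_one r)
  have hXtr : (W - (r : ℂ) • (1 : Matrix n n ℂ)).trace = 0 := by
    rw [trace_sub, trace_smul, trace_one, hr, smul_eq_mul]
    push_cast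
    rw [hre, div_mul_cancel₀ _ hcard, sub_self]
  obtain ⟨c, hc⟩ := hΛspan _ hX hXtr
  have hXX : ((W - (r : ℂ) • 1) * (W - (r : ℂ) • (1 : Matrix n n ℂ))).trace.re = 0 := by
    nth_rewrite 1 [hc]
    rw [re_trace_comb_mul]
    refine Finset.sum_eq_zero fun i _ => ?_
    rw [mul_sub, trace_sub, Complex.sub_re, h i]
    simp [hΛtrace]
  have hXX' : ((W - (r : ℂ) • 1)ᴴ * (W - (r : ℂ) • (1 : Matrix n n ℂ))).trace = 0 := by
    rw [hX.eq]
    exact Complex.ext hXX (trace_mul_im_eq_zero hX hX)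
  exact ⟨r, sub_eq_zero.mp (trace_conjTranspose_mul_self_eq_zero_iff.mp hXX')⟩

/-- Fisher information of a random projective measurement, off-diagonal entry:
`y₁ · J(M)⁻¹ y₂ = 0` in the irreducible case. -/
theorem random_projective_fisher_offdiagonal
    (d : ℕ) (hd : 2 ≤ d)
    (ρ : Matrix (Fin d) (Fin d) ℂ)
    (hρ : ρ.PosDef) (hρtr : ρ.trace = 1)
    (Λ : Fin (d ^ 2 - 1) → Matrix (Fin d) (Fin d) ℂ)
    (hΛherm : ∀ i, (Λ i).IsHermitian)
    (hΛtrace : ∀ i, (Λ i).trace = 0)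
    (hΛortho : ∀ i j, (Λ i * Λ j).trace = if i = j then 1 else 0)
    (hΛspan : ∀ X : Matrix (Fin d) (Fin d) ℂ, X.IsHermitian → X.trace = 0 →
      ∃ c : Fin (d ^ 2 - 1) → ℝ, X = ∑ i, (c i : ℂ) • Λ i)
    (Y₁ Y₂ : Matrix (Fin d) (Fin d) ℂ)
    (hY₁ : Y₁.IsHermitian) (hY₂ : Y₂.IsHermitian)
    (hirr : ∀ Z : Matrix (Fin d) (Fin d) ℂ, Z * Y₁ = Y₁ * Z → Z * Y₂ = Y₂ * Z →
      ∃ c : ℂ, Z = c • (1 : Matrix (Fin d) (Fin d) ℂ))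
    (ι₁ ι₂ : Type) [Fintype ι₁] [Fintype ι₂] [DecidableEq ι₁] [DecidableEq ι₂]
    (P₁ : ι₁ → Matrix (Fin d) (Fin d) ℂ)
    (P₂ : ι₂ → Matrix (Fin d) (Fin d) ℂ)
    (hP₁herm : ∀ i, (P₁ i).IsHermitian)
    (hP₂herm : ∀ i, (P₂ i).IsHermitian)
    (hP₁orth : ∀ i j, P₁ i * P₁ j = if i = j then P₁ i else 0)
    (hP₂orth : ∀ i j, P₂ i * P₂ j = if i = j then P₂ i else 0)
    (hP₁ne : ∀ i, P₁ i ≠ 0)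
    (hP₂ne : ∀ i, P₂ i ≠ 0)
    (hP₁sum : ∑ i, P₁ i = 1)
    (hP₂sum : ∑ i, P₂ i = 1)
    (β₁ : ι₁ → ℝ) (β₂ : ι₂ → ℝ)
    (hβ₁ : Function.Injective β₁) (hβ₂ : Function.Injective β₂)
    (hspec₁ : Y₁ = ∑ i, (β₁ i : ℂ) • P₁ i)
    (hspec₂ : Y₂ = ∑ i, (β₂ i : ℂ) • P₂ i)
    (q₁ q₂ : ℝ) (hq₁ : 0 < q₁) (hq₂ : 0 < q₂) (hq : q₁ + q₂ = 1)
    (M : ι₁ ⊕ ι₂ → Matrix (Fin d) (Fin d) ℂ)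
    (hM : M = Sum.elim (fun i => (q₁ : ℂ) • P₁ i) (fun i => (q₂ : ℂ) • P₂ i))
    (J : Matrix (Fin (d ^ 2 - 1)) (Fin (d ^ 2 - 1)) ℝ)
    (hJ : ∀ i j, J i j =
      ∑ k, ((Λ i * M k).trace.re * (Λ j * M k).trace.re) / (ρ * M k).trace.re)
    (y₁ y₂ : Fin (d ^ 2 - 1) → ℝ)
    (hy₁ : ∀ i, y₁ i = ((Λ i * Y₁).trace).re)
    (hy₂ : ∀ i, y₂ i = ((Λ i * Y₂).trace).re) :
    ∀ u : Fin (d ^ 2 - 1) → ℝ, J *ᵥ u = y₂ → y₁ ⬝ᵥ u = 0 := by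
  intro u hu
  have : Nonempty (Fin d) := ⟨⟨0, by omega⟩⟩
  set U : Matrix (Fin d) (Fin d) ℂ := ∑ j, (u j : ℂ) • Λ j with hU
  have hUtr : U.trace = 0 := by simp [hU, trace_sum, hΛtrace]
  set A : Matrix (Fin d) (Fin d) ℂ :=
    ∑ i, (((U * P₁ i).trace.re / (ρ * P₁ i).trace.re : ℝ) : ℂ) • P₁ i with hA
  set B : Matrix (Fin d) (Fin d) ℂ :=
    ∑ i, (((U * P₂ i).trace.re / (ρ * P₂ i).trace.re : ℝ) : ℂ) • P₂ i with hB
  have hAherm : A.IsHermitian := isHermitian_real_comb hP₁herm _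
  have hBherm : B.IsHermitian := isHermitian_real_comb hP₂herm _
  have hW : ((q₁ : ℂ) • A + (q₂ : ℂ) • B - Y₂).IsHermitian :=
    ((isHermitian_real_smul hAherm q₁).add (isHermitian_real_smul hBherm q₂)).sub hY₂
  have horth : ∀ i, (Λ i * ((q₁ : ℂ) • A + (q₂ : ℂ) • B - Y₂)).trace.re = 0 := by
    intro i
    have h1 : ∑ k, (U * M k).trace.re / (ρ * M k).trace.re * (Λ i * M k).trace.re
        = (Λ i * Y₂).trace.re := by
      rw [← hy₂ i, ← hu, mulVec, dotProduct]
      simp_rw [hJ, hU, re_trace_comb_mul, Finset.sum_mul, Finset.sum_div, Finset.sum_mul]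
      rw [Finset.sum_comm]
      exact Finset.sum_congr rfl fun j _ => Finset.sum_congr rfl fun k _ => by ring
    have h2 : (Λ i * A).trace.re = _ := re_trace_mul_comb P₁ _ (Λ i)
    have h3 : (Λ i * B).trace.re = _ := re_trace_mul_comb P₂ _ (Λ i)
    rw [hM, Fintype.sum_sum_type] at h1
    simp only [Sum.elim_inl, Sum.elim_inr, Matrix.mul_smul, trace_smul, smul_eq_mul,
      Complex.re_ofReal_mul, mul_div_mul_left _ _ hq₁.ne', mul_div_mul_left _ _ hq₂.ne'] at h1
    rw [mul_sub, mul_add, trace_sub, trace_add, Complex.sub_re, Complex.add_re, ← h1]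
    simp only [Matrix.mul_smul, trace_smul, smul_eq_mul, Complex.re_ofReal_mul]
    rw [h2, h3, Finset.mul_sum, Finset.mul_sum, sub_eq_zero]
    congr 1 <;> exact Finset.sum_congr rfl fun k _ => by ring
  obtain ⟨c, hc⟩ := eq_smul_one_of_orthogonal hΛtrace hΛspan hW horth
  have hAY₁ : Commute A Y₁ := hspec₁ ▸ comb_commute hP₁orth _ _
  have hBY₂ : Commute B Y₂ := hspec₂ ▸ comb_commute hP₂orth _ _
  have hAY₂ : Commute A Y₂ := by
    have hq₁' : (q₁ : ℂ) ≠ 0 := by exact_mod_cast hq₁.ne'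
    have hAeq : A = (q₁ : ℂ)⁻¹ • (c • 1 + Y₂ - (q₂ : ℂ) • B) := by
      rw [← hc, eq_inv_smul_iff₀ hq₁']
      abel
    rw [hAeq]
    exact ((((Commute.one_left Y₂).smul_left c).add_left (Commute.refl Y₂)).sub_left
      (hBY₂.smul_left _)).smul_left _
  obtain ⟨a, ha⟩ := hirr A hAY₁ hAY₂
  -- Multiplying `A = a • 1` by `P₁ k` isolates its `k`-th coefficient.
  have hcoef : ∀ k, (((U * P₁ k).trace.re / (ρ * P₁ k).trace.re : ℝ) : ℂ) = a := by
    intro k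
    have h : A * P₁ k = a • P₁ k := by rw [ha]; simp
    rw [hA, Finset.sum_mul] at h
    simp only [Matrix.smul_mul, hP₁orth, smul_ite, smul_zero, Finset.sum_ite_eq',
      Finset.mem_univ, if_true] at h
    exact smul_left_injective ℂ (hP₁ne k) h
  have ht : ∀ k, (U * P₁ k).trace.re = a.re * (ρ * P₁ k).trace.re := by
    intro k
    have hp : (ρ * P₁ k).trace.re ≠ 0 :=
      re_trace_mul_proj_ne_zero hρ (hP₁herm k) (by simp [hP₁orth]) (hP₁ne k)
    rw [← hcoef k, Complex.ofReal_re, div_mul_cancel₀ _ hp]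
  have hsum : ∀ X : Matrix (Fin d) (Fin d) ℂ, ∑ k, (X * P₁ k).trace.re = X.trace.re := by
    intro X
    rw [← Complex.re_sum, ← trace_sum, ← Finset.mul_sum, hP₁sum, mul_one]
  have ha0 : a.re = 0 := by
    have h := hsum U
    simp_rw [ht] at h
    rw [← Finset.mul_sum, hsum, hρtr, hUtr] at h
    simpa using h
  have hfin : y₁ ⬝ᵥ u = (U * Y₁).trace.re := by
    rw [hU, re_trace_comb_mul, dotProduct]
    exact Finset.sum_congr rfl fun i _ => by rw [hy₁, mul_comm]
  rw [hfin, hspec₁, re_trace_mul_comb]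
  exact Finset.sum_eq_zero fun k _ => by rw [ht, ha0]; ring
end

section
/- Equation (4), the non-optimal random measurement of the observables themselves: let X₁, X₂ be Hermitian d×d matrices such that every d×d complex matrix commuting with both X₁ and X₂ is a scalar multiple of the identity. For μ = 1, 2 let X_μ = Σ_i α_{μ,i} P_{μ,i} be the spectral decomposition of X_μ, let q₁, q₂ > 0 with q₁ + q₂ = 1, and let M be the POVM with elements {q_μ P_{μ,i}}. Let x₁, x₂ ∈ ℝ^{d²−1} be the coordinate vectors of X₁, X₂, and suppose u₁, u₂ ∈ ℝ^{d²−1} satisfy J(M)u₁ = x₁ and J(M)u₂ = x₂. Then the product of the measurement errors satisfies (x₁·u₁ − Var_ρ(X₁)) · (x₂·u₂ − Var_ρ(X₂)) = Var_ρ(X₁) Var_ρ(X₂), independently of q₁ and q₂. -/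
/-!
Write `U = ∑ j, u j • Λ j` for a solution `u` of `J u = x₁`. Pairing with the `Λ i`, which span the
traceless Hermitian matrices, turns the linear system into the operator identity
`X₁ = c • 1 + q₁ • A₁ + q₂ • A₂`, where `A_μ = ∑ i, (Tr(U P_{μ,i}) / Tr(ρ P_{μ,i})) • P_{μ,i}`
(`eq_scalar_of_trace_eq`). The matrix `A₂` commutes with `X₂` because it is a combination of the
spectral projections of `X₂`, and with `X₁` because of the identity; hence it is scalar by
irreducibility, and `Tr(ρ A₂) = Tr U = 0` forces `A₂ = 0`. Thus `A₁ = (X₁ - Tr(ρ X₁)) / q₁` and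
`x₁ · u = Tr(X₁ U) = Tr(ρ X₁ A₁) = Var_ρ(X₁) / q₁` (`trace_mul_eq_variance_div`). The error of `X₁` is
therefore `Var_ρ(X₁) q₂ / q₁`, that of `X₂` is `Var_ρ(X₂) q₁ / q₂`, and the weights cancel in the
product.
-/

open Matrix BigOperators ComplexOrder

section

variable {d : ℕ}

lemma trace_mul_real {A B : Matrix (Fin d) (Fin d) ℂ} (hA : A.IsHermitian) (hB : B.IsHermitian) :
    (((A * B).trace.re : ℝ) : ℂ) = (A * B).trace := by
  apply Complex.conj_eq_iff_re.mp
  have h := Matrix.trace_conjTranspose (A * B)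
  rw [conjTranspose_mul, hA.eq, hB.eq, trace_mul_comm] at h
  exact h.symm

lemma trace_mul_proj_ne_zero {ρ P : Matrix (Fin d) (Fin d) ℂ} (hρ : ρ.PosDef)
    (hP : P.IsHermitian) (hPP : P * P = P) (hne : P ≠ 0) : (ρ * P).trace ≠ 0 := by
  intro h
  apply hne
  have h1 : (Pᴴ * ρ * P).trace = 0 := by
    rw [hP.eq, trace_mul_comm, ← mul_assoc, hPP, trace_mul_comm, h]
  have h2 : Pᴴ * ρ * P = 0 :=
    (hρ.posSemidef.conjTranspose_mul_mul_same P).trace_eq_zero_iff.mp h1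
  have h3 : ∀ v, P *ᵥ v = 0 := by
    intro v
    by_contra hv
    have h4 := hρ.dotProduct_mulVec_pos hv
    have h5 : star (P *ᵥ v) ⬝ᵥ ρ *ᵥ (P *ᵥ v) = star v ⬝ᵥ (Pᴴ * ρ * P) *ᵥ v := by
      rw [star_mulVec, ← dotProduct_mulVec, mulVec_mulVec, mulVec_mulVec, mul_assoc]
    rw [h5, h2] at h4
    simp at h4
  ext i j
  have := congrFun (h3 (Pi.single j 1)) i
  simpa using this

lemma sum_smul_proj_mul {ι : Type} [Fintype ι] [DecidableEq ι]
    {P : ι → Matrix (Fin d) (Fin d) ℂ} (hP : ∀ i j, P i * P j = if i = j then P i else 0)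
    (a b : ι → ℂ) : (∑ i, a i • P i) * (∑ i, b i • P i) = ∑ i, (a i * b i) • P i := by
  simp [Finset.sum_mul, Finset.mul_sum, hP, smul_smul, mul_comm]

/-- A Hermitian matrix orthogonal to all traceless Hermitian matrices is scalar: its traceless part
`D` is a combination of the `Λ i`, so `Tr(Dᴴ D) = 0`. -/
lemma eq_scalar_of_trace_eq (hd : 2 ≤ d) {n : ℕ} {Λ : Fin n → Matrix (Fin d) (Fin d) ℂ}
    (hΛtrace : ∀ i, (Λ i).trace = 0)
    (hΛspan : ∀ X : Matrix (Fin d) (Fin d) ℂ, X.IsHermitian → X.trace = 0 →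
      ∃ c : Fin n → ℝ, X = ∑ i, (c i : ℂ) • Λ i)
    {W : Matrix (Fin d) (Fin d) ℂ} (hW : W.IsHermitian)
    (h : ∀ i, (Λ i * W).trace = 0) : ∃ c : ℂ, W = c • (1 : Matrix (Fin d) (Fin d) ℂ) := by
  have hd0 : (d : ℂ) ≠ 0 := by
    exact_mod_cast (by omega : d ≠ 0)
  refine ⟨W.trace / d, ?_⟩
  set c : ℂ := W.trace / d with hc
  have hcs : star c = c := by
    rw [hc]
    have := Matrix.trace_conjTranspose W
    rw [hW.eq] at this
    simp only [star_div₀, ← this, star_natCast]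
  set D := W - c • (1 : Matrix (Fin d) (Fin d) ℂ) with hD
  have hDh : D.IsHermitian := by
    rw [IsHermitian, hD, conjTranspose_sub, conjTranspose_smul, hcs, hW.eq, conjTranspose_one]
  have hDt : D.trace = 0 := by
    rw [hD, trace_sub, trace_smul, trace_one, hc]
    simp only [Fintype.card_fin, smul_eq_mul]
    field_simp
    simp
  obtain ⟨e, he⟩ := hΛspan D hDh hDt
  have hDD : (Dᴴ * D).trace = 0 := by
    rw [hDh.eq]
    nth_rewrite 1 [he]
    rw [Finset.sum_mul, trace_sum]
    apply Finset.sum_eq_zero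
    intro i _
    rw [smul_mul_assoc, trace_smul, hD, mul_sub, trace_sub, h i, mul_smul_comm, trace_smul,
      mul_one, hΛtrace i]
    simp
  have := trace_conjTranspose_mul_self_eq_zero_iff.mp hDD
  rwa [hD, sub_eq_zero] at this

/-- If `X₁` is, up to a scalar, the weighted sum of the inverse-probability estimators built from
`U`, then irreducibility removes the `P₂` part and the pairing of `X₁` with `U` equals
`Var_ρ(X₁) / q₁`. -/
lemma trace_mul_eq_variance_div
    {ρ : Matrix (Fin d) (Fin d) ℂ} (hρ : ρ.PosDef) (hρtr : ρ.trace = 1)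
    {X₁ X₂ : Matrix (Fin d) (Fin d) ℂ}
    (hirr : ∀ Z : Matrix (Fin d) (Fin d) ℂ, Z * X₁ = X₁ * Z → Z * X₂ = X₂ * Z →
      ∃ c : ℂ, Z = c • (1 : Matrix (Fin d) (Fin d) ℂ))
    {ι₁ ι₂ : Type} [Fintype ι₁] [Fintype ι₂] [DecidableEq ι₁] [DecidableEq ι₂]
    {P₁ : ι₁ → Matrix (Fin d) (Fin d) ℂ}
    {P₂ : ι₂ → Matrix (Fin d) (Fin d) ℂ}
    (hP₁herm : ∀ i, (P₁ i).IsHermitian)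
    (hP₂herm : ∀ i, (P₂ i).IsHermitian)
    (hP₁orth : ∀ i j, P₁ i * P₁ j = if i = j then P₁ i else 0)
    (hP₂orth : ∀ i j, P₂ i * P₂ j = if i = j then P₂ i else 0)
    (hP₁ne : ∀ i, P₁ i ≠ 0)
    (hP₂ne : ∀ i, P₂ i ≠ 0)
    (hP₁sum : ∑ i, P₁ i = 1)
    (hP₂sum : ∑ i, P₂ i = 1)
    {β₁ : ι₁ → ℝ} {β₂ : ι₂ → ℝ}
    (hspec₁ : X₁ = ∑ i, (β₁ i : ℂ) • P₁ i)
    (hspec₂ : X₂ = ∑ i, (β₂ i : ℂ) • P₂ i)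
    {q₁ q₂ : ℂ} (hq₁ : q₁ ≠ 0) (hq₂ : q₂ ≠ 0)
    {U : Matrix (Fin d) (Fin d) ℂ} (hUt : U.trace = 0) {c : ℂ}
    (hU : X₁ - (q₁ • ∑ i, ((U * P₁ i).trace / (ρ * P₁ i).trace) • P₁ i +
      q₂ • ∑ i, ((U * P₂ i).trace / (ρ * P₂ i).trace) • P₂ i) =
        c • (1 : Matrix (Fin d) (Fin d) ℂ)) :
    (U * X₁).trace = ((ρ * X₁ ^ 2).trace - (ρ * X₁).trace ^ 2) / q₁ := by
  have hp₁ : ∀ i, (ρ * P₁ i).trace ≠ 0 := fun i =>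
    trace_mul_proj_ne_zero hρ (hP₁herm i) (by simp [hP₁orth]) (hP₁ne i)
  have hp₂ : ∀ i, (ρ * P₂ i).trace ≠ 0 := fun i =>
    trace_mul_proj_ne_zero hρ (hP₂herm i) (by simp [hP₂orth]) (hP₂ne i)
  set A₁ := ∑ i, ((U * P₁ i).trace / (ρ * P₁ i).trace) • P₁ i with hA₁
  set A₂ := ∑ i, ((U * P₂ i).trace / (ρ * P₂ i).trace) • P₂ i with hA₂
  have hc₁ : A₁ * X₁ = X₁ * A₁ := by
    rw [hspec₁, hA₁, sum_smul_proj_mul hP₁orth, sum_smul_proj_mul hP₁orth]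
    simp only [mul_comm]
  have hc₂ : A₂ * X₂ = X₂ * A₂ := by
    rw [hspec₂, hA₂, sum_smul_proj_mul hP₂orth, sum_smul_proj_mul hP₂orth]
    simp only [mul_comm]
  have hA₂eq : A₂ = q₂⁻¹ • (X₁ - c • (1 : Matrix (Fin d) (Fin d) ℂ) - q₁ • A₁) := by
    rw [← hU, eq_inv_smul_iff₀ hq₂]
    abel
  have hc₃ : A₂ * X₁ = X₁ * A₂ := by
    rw [hA₂eq]
    simp only [smul_mul_assoc, mul_smul_comm, sub_mul, mul_sub, hc₁, one_mul, mul_one]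
  have ht₁ : (ρ * A₁).trace = 0 := by
    rw [hA₁, Finset.mul_sum, trace_sum]
    simp only [mul_smul_comm, trace_smul, smul_eq_mul, div_mul_cancel₀ _ (hp₁ _)]
    rw [← trace_sum, ← Finset.mul_sum, hP₁sum, mul_one, hUt]
  have ht₂ : (ρ * A₂).trace = 0 := by
    rw [hA₂, Finset.mul_sum, trace_sum]
    simp only [mul_smul_comm, trace_smul, smul_eq_mul, div_mul_cancel₀ _ (hp₂ _)]
    rw [← trace_sum, ← Finset.mul_sum, hP₂sum, mul_one, hUt]
  obtain ⟨s, hs⟩ := hirr A₂ hc₃ hc₂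
  have hs0 : A₂ = 0 := by
    rw [hs, mul_smul_comm, mul_one, trace_smul, hρtr] at ht₂
    have : s = 0 := by simpa using ht₂
    rw [hs, this, zero_smul]
  rw [hs0, smul_zero, add_zero] at hU
  have hcval : (ρ * X₁).trace = c := by
    have := congrArg (fun Z => (ρ * Z).trace) hU
    simpa [mul_sub, ht₁, hρtr] using this
  have hqA : q₁ • A₁ = X₁ - c • (1 : Matrix (Fin d) (Fin d) ℂ) := by
    rw [← hU]; abel
  have hUX : (U * X₁).trace = (ρ * (X₁ * A₁)).trace := by
    rw [hspec₁, hA₁, sum_smul_proj_mul hP₁orth, Finset.mul_sum, Finset.mul_sum, trace_sum,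
      trace_sum]
    refine Finset.sum_congr rfl fun i _ => ?_
    rw [mul_smul_comm, mul_smul_comm, trace_smul, trace_smul, smul_eq_mul, smul_eq_mul, mul_assoc,
      div_mul_cancel₀ _ (hp₁ i)]
  rw [eq_div_iff hq₁, hUX]
  calc (ρ * (X₁ * A₁)).trace * q₁ = (ρ * (X₁ * (q₁ • A₁))).trace := by
        simp [mul_comm]
    _ = _ := by
        rw [hqA, hcval]
        simp only [mul_sub, mul_smul_comm, mul_one, trace_sub, trace_smul, hcval, smul_eq_mul, sq]

/-- For a solution `u` of the system `J u = x₁`, written out as sums over the outcomes of the two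
projective measurements, `x₁ · u = Var_ρ(X₁) / q₁`. -/
lemma dotProduct_eq_variance_div
    (hd : 2 ≤ d) {ρ : Matrix (Fin d) (Fin d) ℂ} (hρ : ρ.PosDef) (hρtr : ρ.trace = 1)
    {n : ℕ} {Λ : Fin n → Matrix (Fin d) (Fin d) ℂ}
    (hΛherm : ∀ i, (Λ i).IsHermitian)
    (hΛtrace : ∀ i, (Λ i).trace = 0)
    (hΛspan : ∀ X : Matrix (Fin d) (Fin d) ℂ, X.IsHermitian → X.trace = 0 →
      ∃ c : Fin n → ℝ, X = ∑ i, (c i : ℂ) • Λ i)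
    {X₁ X₂ : Matrix (Fin d) (Fin d) ℂ} (hX₁ : X₁.IsHermitian)
    (hirr : ∀ Z : Matrix (Fin d) (Fin d) ℂ, Z * X₁ = X₁ * Z → Z * X₂ = X₂ * Z →
      ∃ c : ℂ, Z = c • (1 : Matrix (Fin d) (Fin d) ℂ))
    {ι₁ ι₂ : Type} [Fintype ι₁] [Fintype ι₂] [DecidableEq ι₁] [DecidableEq ι₂]
    {P₁ : ι₁ → Matrix (Fin d) (Fin d) ℂ}
    {P₂ : ι₂ → Matrix (Fin d) (Fin d) ℂ}
    (hP₁herm : ∀ i, (P₁ i).IsHermitian)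
    (hP₂herm : ∀ i, (P₂ i).IsHermitian)
    (hP₁orth : ∀ i j, P₁ i * P₁ j = if i = j then P₁ i else 0)
    (hP₂orth : ∀ i j, P₂ i * P₂ j = if i = j then P₂ i else 0)
    (hP₁ne : ∀ i, P₁ i ≠ 0)
    (hP₂ne : ∀ i, P₂ i ≠ 0)
    (hP₁sum : ∑ i, P₁ i = 1)
    (hP₂sum : ∑ i, P₂ i = 1)
    {β₁ : ι₁ → ℝ} {β₂ : ι₂ → ℝ}
    (hspec₁ : X₁ = ∑ i, (β₁ i : ℂ) • P₁ i)
    (hspec₂ : X₂ = ∑ i, (β₂ i : ℂ) • P₂ i)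
    {q₁ q₂ : ℝ} (hq₁ : 0 < q₁) (hq₂ : 0 < q₂)
    {x u : Fin n → ℝ} (hx : ∀ i, x i = ((Λ i * X₁).trace).re)
    (hu : ∀ i, ∑ j, (q₁ * ∑ k, ((Λ i * P₁ k).trace.re * (Λ j * P₁ k).trace.re)
        / (ρ * P₁ k).trace.re + q₂ * ∑ k, ((Λ i * P₂ k).trace.re * (Λ j * P₂ k).trace.re)
        / (ρ * P₂ k).trace.re) * u j = x i) :
    x ⬝ᵥ u = ((ρ * X₁ ^ 2).trace.re - ((ρ * X₁).trace.re) ^ 2) / q₁ := by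
  set U : Matrix (Fin d) (Fin d) ℂ := ∑ j, (u j : ℂ) • Λ j with hUdef
  have hUh : U.IsHermitian := by
    rw [IsHermitian, hUdef, conjTranspose_sum]
    refine Finset.sum_congr rfl fun j _ => ?_
    rw [conjTranspose_smul, (hΛherm j).eq]
    simp
  have hUt : U.trace = 0 := by
    rw [hUdef, trace_sum]
    simp [hΛtrace]
  have hUP : ∀ Y : Matrix (Fin d) (Fin d) ℂ, (U * Y).trace = ∑ j, (u j : ℂ) * (Λ j * Y).trace := by
    intro Y
    rw [hUdef, Finset.sum_mul, trace_sum]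
    simp
  -- Hermiticity of the estimator `A_μ` and its trace against `Λ i`, uniformly in `μ`.
  have hAherm : ∀ {ι : Type} [Fintype ι] {P : ι → Matrix (Fin d) (Fin d) ℂ} (q : ℝ),
      (∀ i, (P i).IsHermitian) →
      ((q : ℂ) • ∑ k, ((U * P k).trace / (ρ * P k).trace) • P k).IsHermitian := by
    intro ι _ P q hP
    rw [IsHermitian, conjTranspose_smul, conjTranspose_sum]
    congr 1
    · simp
    · refine Finset.sum_congr rfl fun k _ => ?_
      rw [conjTranspose_smul, (hP k).eq, ← trace_mul_real hUh (hP k),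
        ← trace_mul_real hρ.isHermitian (hP k)]
      simp
  have hAtr : ∀ {ι : Type} [Fintype ι] {P : ι → Matrix (Fin d) (Fin d) ℂ} (q : ℝ),
      (∀ i, (P i).IsHermitian) → ∀ i,
      (Λ i * ((q : ℂ) • ∑ k, ((U * P k).trace / (ρ * P k).trace) • P k)).trace =
      ((∑ j, (q * ∑ k, ((Λ i * P k).trace.re * (Λ j * P k).trace.re)
        / (ρ * P k).trace.re) * u j : ℝ) : ℂ) := by
    intro ι _ P q hP i
    push_cast
    rw [mul_smul_comm, trace_smul, Finset.mul_sum, trace_sum]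
    simp only [mul_smul_comm, trace_smul, smul_eq_mul, hUP, trace_mul_real (hΛherm _) (hP _),
      trace_mul_real hρ.isHermitian (hP _), Finset.mul_sum, Finset.sum_mul, Finset.sum_div]
    rw [Finset.sum_comm]
    refine Finset.sum_congr rfl fun j _ => Finset.sum_congr rfl fun k _ => ?_
    ring
  obtain ⟨c, hc⟩ := eq_scalar_of_trace_eq hd hΛtrace hΛspan
    (W := X₁ - ((q₁ : ℂ) • ∑ i, ((U * P₁ i).trace / (ρ * P₁ i).trace) • P₁ i +
      (q₂ : ℂ) • ∑ i, ((U * P₂ i).trace / (ρ * P₂ i).trace) • P₂ i))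
    (hX₁.sub ((hAherm q₁ hP₁herm).add (hAherm q₂ hP₂herm))) (by
      intro i
      rw [mul_sub, mul_add, trace_sub, trace_add, hAtr q₁ hP₁herm, hAtr q₂ hP₂herm,
        ← trace_mul_real (hΛherm i) hX₁, ← hx, ← hu i, ← Complex.ofReal_add,
        ← Finset.sum_add_distrib]
      simp only [add_mul, sub_self])
  have key := trace_mul_eq_variance_div hρ hρtr hirr hP₁herm hP₂herm hP₁orth hP₂orth hP₁ne hP₂ne
    hP₁sum hP₂sum hspec₁ hspec₂ (q₁ := q₁) (q₂ := q₂) (by exact_mod_cast hq₁.ne')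
    (by exact_mod_cast hq₂.ne') hUt hc
  have hxu : ((x ⬝ᵥ u : ℝ) : ℂ) = (U * X₁).trace := by
    rw [hUP, dotProduct]
    push_cast
    refine Finset.sum_congr rfl fun j _ => ?_
    rw [hx, trace_mul_real (hΛherm j) hX₁, mul_comm]
  apply Complex.ofReal_injective
  rw [hxu, key]
  push_cast
  rw [trace_mul_real hρ.isHermitian hX₁, trace_mul_real hρ.isHermitian (hX₁.pow 2)]

end

/-- Equation (4): randomly measuring the observables themselves gives
`ε(X₁;M) ε(X₂;M) = Var_ρ(X₁) Var_ρ(X₂)`, independently of `q₁, q₂`. -/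
theorem random_measurement_of_observables_error_product
    (d : ℕ) (hd : 2 ≤ d)
    (ρ : Matrix (Fin d) (Fin d) ℂ)
    (hρ : ρ.PosDef) (hρtr : ρ.trace = 1)
    (Λ : Fin (d ^ 2 - 1) → Matrix (Fin d) (Fin d) ℂ)
    (hΛherm : ∀ i, (Λ i).IsHermitian)
    (hΛtrace : ∀ i, (Λ i).trace = 0)
    (hΛortho : ∀ i j, (Λ i * Λ j).trace = if i = j then 1 else 0)
    (hΛspan : ∀ X : Matrix (Fin d) (Fin d) ℂ, X.IsHermitian → X.trace = 0 →
      ∃ c : Fin (d ^ 2 - 1) → ℝ, X = ∑ i, (c i : ℂ) • Λ i)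
    (X₁ X₂ : Matrix (Fin d) (Fin d) ℂ)
    (hX₁ : X₁.IsHermitian) (hX₂ : X₂.IsHermitian)
    (hirr : ∀ Z : Matrix (Fin d) (Fin d) ℂ, Z * X₁ = X₁ * Z → Z * X₂ = X₂ * Z →
      ∃ c : ℂ, Z = c • (1 : Matrix (Fin d) (Fin d) ℂ))
    (ι₁ ι₂ : Type) [Fintype ι₁] [Fintype ι₂] [DecidableEq ι₁] [DecidableEq ι₂]
    (P₁ : ι₁ → Matrix (Fin d) (Fin d) ℂ)
    (P₂ : ι₂ → Matrix (Fin d) (Fin d) ℂ)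
    (hP₁herm : ∀ i, (P₁ i).IsHermitian)
    (hP₂herm : ∀ i, (P₂ i).IsHermitian)
    (hP₁orth : ∀ i j, P₁ i * P₁ j = if i = j then P₁ i else 0)
    (hP₂orth : ∀ i j, P₂ i * P₂ j = if i = j then P₂ i else 0)
    (hP₁ne : ∀ i, P₁ i ≠ 0)
    (hP₂ne : ∀ i, P₂ i ≠ 0)
    (hP₁sum : ∑ i, P₁ i = 1)
    (hP₂sum : ∑ i, P₂ i = 1)
    (β₁ : ι₁ → ℝ) (β₂ : ι₂ → ℝ)
    (hβ₁ : Function.Injective β₁) (hβ₂ : Function.Injective β₂)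
    (hspec₁ : X₁ = ∑ i, (β₁ i : ℂ) • P₁ i)
    (hspec₂ : X₂ = ∑ i, (β₂ i : ℂ) • P₂ i)
    (q₁ q₂ : ℝ) (hq₁ : 0 < q₁) (hq₂ : 0 < q₂) (hq : q₁ + q₂ = 1)
    (M : ι₁ ⊕ ι₂ → Matrix (Fin d) (Fin d) ℂ)
    (hM : M = Sum.elim (fun i => (q₁ : ℂ) • P₁ i) (fun i => (q₂ : ℂ) • P₂ i))
    (J : Matrix (Fin (d ^ 2 - 1)) (Fin (d ^ 2 - 1)) ℝ)
    (hJ : ∀ i j, J i j =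
      ∑ k, ((Λ i * M k).trace.re * (Λ j * M k).trace.re) / (ρ * M k).trace.re)
    (x₁ x₂ : Fin (d ^ 2 - 1) → ℝ)
    (hx₁ : ∀ i, x₁ i = ((Λ i * X₁).trace).re)
    (hx₂ : ∀ i, x₂ i = ((Λ i * X₂).trace).re)
    (u₁ u₂ : Fin (d ^ 2 - 1) → ℝ)
    (hu₁ : J *ᵥ u₁ = x₁) (hu₂ : J *ᵥ u₂ = x₂) :
    (x₁ ⬝ᵥ u₁ - ((ρ * X₁ ^ 2).trace.re - ((ρ * X₁).trace.re) ^ 2)) *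
      (x₂ ⬝ᵥ u₂ - ((ρ * X₂ ^ 2).trace.re - ((ρ * X₂).trace.re) ^ 2)) =
    ((ρ * X₁ ^ 2).trace.re - ((ρ * X₁).trace.re) ^ 2) * ((ρ * X₂ ^ 2).trace.re - ((ρ * X₂).trace.re) ^ 2) := by
  have hre : ∀ (q : ℝ) (A B : Matrix (Fin d) (Fin d) ℂ),
      (A * ((q : ℂ) • B)).trace.re = q * (A * B).trace.re := by
    intro q A B
    rw [mul_smul_comm, trace_smul, smul_eq_mul, Complex.re_ofReal_mul]
  have hterm : ∀ q : ℝ, 0 < q → ∀ a b c : ℝ, q * a * (q * b) / (q * c) = q * (a * b / c) := by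
    intro q hq a b c
    rw [show q * a * (q * b) = q * (q * (a * b)) by ring, mul_div_mul_left _ _ hq.ne', mul_div_assoc]
  have hJ' : ∀ i j, J i j = q₁ * ∑ k, ((Λ i * P₁ k).trace.re * (Λ j * P₁ k).trace.re)
        / (ρ * P₁ k).trace.re + q₂ * ∑ k, ((Λ i * P₂ k).trace.re * (Λ j * P₂ k).trace.re)
        / (ρ * P₂ k).trace.re := by
    intro i j
    rw [hJ, hM, Fintype.sum_sum_type]
    simp only [Sum.elim_inl, Sum.elim_inr, hre, hterm q₁ hq₁, hterm q₂ hq₂, Finset.mul_sum]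
  have h₁ := dotProduct_eq_variance_div hd hρ hρtr hΛherm hΛtrace hΛspan hX₁ hirr hP₁herm hP₂herm
    hP₁orth hP₂orth hP₁ne hP₂ne hP₁sum hP₂sum hspec₁ hspec₂ hq₁ hq₂ hx₁ (u := u₁) (by
      intro i
      rw [← hu₁]
      simp only [← hJ']
      rfl)
  have h₂ := dotProduct_eq_variance_div hd hρ hρtr hΛherm hΛtrace hΛspan hX₂
    (fun Z h h' => hirr Z h' h) hP₂herm hP₁herm
    hP₂orth hP₁orth hP₂ne hP₁ne hP₂sum hP₁sum hspec₂ hspec₁ hq₂ hq₁ hx₂ (u := u₂) (by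
      intro i
      rw [← hu₂]
      simp only [add_comm (q₂ * _), ← hJ']
      rfl)
  rw [h₁, h₂]
  obtain rfl : q₂ = 1 - q₁ := by linarith
  have := hq₁.ne'
  have := hq₂.ne'
  field_simp
  ring
end
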